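/- Under assumptions (A) and (B), with Σ^{(j)} = H_j^{−1} − diag(M_j) + M_j M_j^T positive definite for each j, let ρ^{(k)} = |w|^{−1} Σ_{j=1}^p w_j ρ_j^{⊗k} where ρ_j is the probability measure on {1,…,q} with ρ_j(l) = M_{j,l}. If k = k(N) is a sequence with lim_{N→∞} k/N = α ∈ (0,1], then liminf_{N→∞} H(μ_N^{(k)} | ρ^{(k)}) > 0, where μ_N^{(k)} is the distribution of (σ_1,…,σ_k) under μ_N; i.e., the propagation of chaos stops for marginals of size proportional to N. -/

import Mathlib

/-!
Let `G* = max G`. If `M` is a maximizer and `ρ` the corresponding law on colours, the Gibbs weight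
of a configuration with empirical measure `m` is its `ρ^{⊗N}`-weight times
`exp (N G*) * exp (N (G m - G* + H(m | M)))`. The Hessian of `H(· | M)` at `M` is the inverse of
`diag M - M Mᵀ`, and positive definiteness of `Σ = (-Hess G(M))⁻¹ - diag M + M Mᵀ` says exactly
that it strictly dominates `-Hess G(M)`. Hence, for `m` close to `M`, the last exponent is at least
`N η ‖m - M‖²`: the Gibbs measure favours fluctuations of order `√N` over the product measure.

Since `Z_N ≍ exp (N G*)`, this can be detected on a positive fraction of the spins. Consider the
event that the first `k` spins have an empirical measure close to `M`, while the number of those of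
some fixed colour deviates from its mean by a large multiple of `√N`. The remaining spins typically
do not undo this deviation, so the Gibbs measure gives the event at least twice its
`ρ^{⊗k}`-mass. That mass is bounded below because `k` is of order `N`, and the other components of
the mixture give the event a vanishing mass. Testing the relative entropy against the event bounds
it below.

The `liminf` is taken in `ℝ`, where it has a junk value on unbounded sequences, so the relative
entropies must also be bounded above. Data processing reduces this to the full Gibbs measure, where
it follows from the quadratic growth of `G* - G` away from the maximizers.
-/

open Filter Real MeasureTheory

/-- Relative entropy (Kullback–Leibler divergence) between two probability mass
functions on a finite set. -/
noncomputable def relEnt {α : Type*} [Fintype α] (rho pion : α → ℝ) : ℝ :=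
  ∑ x, rho x * Real.log (rho x / pion x)

namespace MeanFieldPotts

open Finset

/-! ### Configurations and product measures -/

section ColorCount

variable {ι κ : Type*} [Fintype ι] [DecidableEq κ]

/-- The number of sites of the configuration `σ` that carry the colour `l`. -/
def colorCount (σ : ι → κ) (l : κ) : ℕ := (univ.filter fun i => σ i = l).card

lemma colorCount_le_card (σ : ι → κ) (l : κ) : colorCount σ l ≤ Fintype.card ι :=
  card_le_univ _

variable [Fintype κ]

lemma sum_comp_eq_sum_colorCount_mul (f : κ → ℝ) (σ : ι → κ) :
    ∑ i, f (σ i) = ∑ l, (colorCount σ l : ℝ) * f l := by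
  rw [← sum_fiberwise' univ σ f]
  simp only [sum_const, nsmul_eq_mul, colorCount]

lemma sum_colorCount (σ : ι → κ) : ∑ l, colorCount σ l = Fintype.card ι :=
  (card_eq_sum_card_fiberwise fun i _ => mem_coe.2 (mem_univ (σ i))).symm

end ColorCount

section ProdWeight

variable {ι κ : Type*} [Fintype ι]

/-- The weight of the configuration `σ` under the product of copies of the weight `v` on colours;
`v` need not be normalized. -/
def prodWeight (v : κ → ℝ) (σ : ι → κ) : ℝ := ∏ i, v (σ i)

lemma prodWeight_nonneg {v : κ → ℝ} (hv : ∀ l, 0 ≤ v l) (σ : ι → κ) : 0 ≤ prodWeight v σ :=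
  prod_nonneg fun i _ => hv (σ i)

lemma prodWeight_pos {v : κ → ℝ} (hv : ∀ l, 0 < v l) (σ : ι → κ) : 0 < prodWeight v σ :=
  prod_pos fun i _ => hv (σ i)

variable [Fintype κ] [DecidableEq ι]

lemma sum_prodWeight_mul_prod (v : κ → ℝ) (g : ι → κ → ℝ) :
    ∑ σ : ι → κ, prodWeight v σ * ∏ i, g i (σ i) = ∏ i, ∑ a, v a * g i a := by
  rw [prod_univ_sum, Fintype.piFinset_univ]
  simp only [prodWeight, prod_mul_distrib]

lemma sum_prodWeight (v : κ → ℝ) :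
    ∑ σ : ι → κ, prodWeight v σ = (∑ l, v l) ^ Fintype.card ι := by
  simpa using sum_prodWeight_mul_prod (ι := ι) v fun _ _ => 1

lemma sum_prodWeight_eq_one {v : κ → ℝ} (hv1 : ∑ l, v l = 1) :
    ∑ σ : ι → κ, prodWeight v σ = 1 := by
  rw [sum_prodWeight, hv1, one_pow]

omit [DecidableEq ι] in
lemma sum_prodWeight_subset_le_one {v : κ → ℝ} (hv : v ∈ stdSimplex ℝ κ) (E : Finset (ι → κ)) :
    ∑ σ ∈ E, prodWeight v σ ≤ 1 := by
  classical
  exact (sum_le_univ_sum_of_nonneg fun σ => prodWeight_nonneg hv.1 σ).trans_eq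
    (sum_prodWeight_eq_one hv.2)

lemma sum_prodWeight_mul_mul {v f : κ → ℝ} (hv1 : ∑ l, v l = 1) (hf : ∑ l, v l * f l = 0)
    (i j : ι) :
    ∑ σ : ι → κ, prodWeight v σ * (f (σ i) * f (σ j))
      = if i = j then ∑ l, v l * f l ^ 2 else 0 := by
  have h := sum_prodWeight_mul_prod v
    fun k a => (if k = i then f a else 1) * if k = j then f a else 1
  simp only [prod_mul_distrib, prod_ite_eq', mem_univ, if_true] at h
  rw [h]
  split_ifs with hij
  · subst hij
    rw [prod_eq_single i (fun k _ hk => by simp [hk, hv1]) (by simp)]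
    simp [sq]
  · exact prod_eq_zero (mem_univ i) (by simp [hij, hf])

lemma sum_prodWeight_mul_sum_sq {v f : κ → ℝ} (hv1 : ∑ l, v l = 1) (hf : ∑ l, v l * f l = 0) :
    ∑ σ : ι → κ, prodWeight v σ * (∑ i, f (σ i)) ^ 2
      = Fintype.card ι * ∑ l, v l * f l ^ 2 := by
  calc ∑ σ : ι → κ, prodWeight v σ * (∑ i, f (σ i)) ^ 2
      = ∑ i, ∑ j, ∑ σ : ι → κ, prodWeight v σ * (f (σ i) * f (σ j)) := by
        simp only [sq, sum_mul_sum]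
        simp only [mul_sum]
        rw [sum_comm]
        exact sum_congr rfl fun _ _ => sum_comm
    _ = Fintype.card ι * ∑ l, v l * f l ^ 2 := by
        simp only [sum_prodWeight_mul_mul hv1 hf, sum_ite_eq, mem_univ, if_true, sum_const,
          card_univ, nsmul_eq_mul]

lemma sum_prodWeight_mul_colorCount_sub_sq [DecidableEq κ] {v : κ → ℝ} (hv1 : ∑ l, v l = 1)
    (l : κ) :
    ∑ σ : ι → κ, prodWeight v σ * ((colorCount σ l : ℝ) - Fintype.card ι * v l) ^ 2
      = Fintype.card ι * (v l * (1 - v l)) := by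
  let f : κ → ℝ := fun a => (if a = l then 1 else 0) - v l
  have hsum (σ : ι → κ) : (colorCount σ l : ℝ) - Fintype.card ι * v l = ∑ i, f (σ i) := by
    simp [f, colorCount]
  have hmean : ∑ a, v a * f a = 0 := by
    simp [f, mul_sub, ← sum_mul, hv1]
  have hvar : ∑ a, v a * f a ^ 2 = v l * (1 - v l) := by
    have (a : κ) : v a * f a ^ 2 = (if a = l then v l * (1 - 2 * v l) else 0) + v a * v l ^ 2 := by
      grind
    simp only [this, sum_add_distrib, sum_ite_eq', mem_univ, if_true, ← sum_mul, hv1]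
    ring
  simp only [hsum, sum_prodWeight_mul_sum_sq hv1 hmean, hvar]

omit [DecidableEq ι] in
lemma sq_sum_prodWeight_le {u v : κ → ℝ} (hv : ∀ l, 0 < v l) (E : Finset (ι → κ)) :
    (∑ σ ∈ E, prodWeight u σ) ^ 2
      ≤ (∑ l, u l ^ 2 / v l) ^ Fintype.card ι * ∑ σ ∈ E, prodWeight v σ := by
  classical
  have hratio (l : κ) : 0 ≤ u l ^ 2 / v l := div_nonneg (sq_nonneg _) (hv l).le
  have hcauchySchwarz : (∑ σ ∈ E, prodWeight u σ) ^ 2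
      ≤ (∑ σ ∈ E, prodWeight (fun l => u l ^ 2 / v l) σ) * ∑ σ ∈ E, prodWeight v σ := by
    refine sum_sq_le_sum_mul_sum_of_sq_le_mul _ (fun σ _ => prodWeight_nonneg hratio σ)
      (fun σ _ => (prodWeight_pos hv σ).le) fun σ _ => le_of_eq ?_
    simp only [prodWeight, ← prod_pow, ← prod_mul_distrib, div_mul_cancel₀ _ (hv _).ne']
  refine hcauchySchwarz.trans (mul_le_mul_of_nonneg_right ?_
    (sum_nonneg fun σ _ => (prodWeight_pos hv σ).le))
  rw [← sum_prodWeight]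
  exact sum_le_univ_sum_of_nonneg fun σ => prodWeight_nonneg hratio σ

end ProdWeight

section TypicalSet

variable {ι κ : Type*} [Fintype ι] [DecidableEq ι] [Fintype κ] [DecidableEq κ]

/-- The configurations all of whose colour counts are within `s` of their expected values under
the product measure with marginal `v`. -/
noncomputable def typicalSet (ι : Type*) [Fintype ι] [DecidableEq ι] (v : κ → ℝ) (s : ℝ) :
    Finset (ι → κ) :=
  univ.filter fun σ => ∀ l, |(colorCount σ l : ℝ) - Fintype.card ι * v l| ≤ s

lemma mem_typicalSet {v : κ → ℝ} {s : ℝ} {σ : ι → κ} :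
    σ ∈ typicalSet ι v s ↔ ∀ l, |(colorCount σ l : ℝ) - Fintype.card ι * v l| ≤ s := by
  simp only [typicalSet, mem_filter, mem_univ, true_and]

lemma one_sub_le_sum_prodWeight_typicalSet {v : κ → ℝ} (hv : v ∈ stdSimplex ℝ κ) {s : ℝ}
    (hs : 0 < s) :
    1 - Fintype.card ι / s ^ 2 ≤ ∑ σ ∈ typicalSet ι v s, prodWeight v σ := by
  let dev (σ : ι → κ) (l : κ) : ℝ := (colorCount σ l : ℝ) - Fintype.card ι * v l
  have hindicator (σ : ι → κ) :
      1 - ∑ l, dev σ l ^ 2 / s ^ 2 ≤ if σ ∈ typicalSet ι v s then 1 else 0 := by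
    have hnonneg (l : κ) (_ : l ∈ univ) : 0 ≤ dev σ l ^ 2 / s ^ 2 := by positivity
    split_ifs with hσ
    · linarith [sum_nonneg hnonneg]
    · simp only [mem_typicalSet, not_forall, not_le] at hσ
      obtain ⟨l, hl⟩ := hσ
      have hone : 1 ≤ dev σ l ^ 2 / s ^ 2 := by
        rw [one_le_div (by positivity), ← sq_abs (dev σ l)]
        exact pow_le_pow_left₀ hs.le hl.le 2
      linarith [single_le_sum hnonneg (mem_univ l)]
  calc 1 - Fintype.card ι / s ^ 2
      ≤ 1 - ∑ l, Fintype.card ι * (v l * (1 - v l)) / s ^ 2 := by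
        rw [← sum_div, ← mul_sum]
        have hvar : ∑ l, v l * (1 - v l) ≤ 1 :=
          (sum_le_sum fun l _ => mul_le_of_le_one_right (hv.1 l) (by linarith [hv.1 l])).trans_eq
            hv.2
        gcongr
        exact mul_le_of_le_one_right (Nat.cast_nonneg _) hvar
    _ = ∑ σ, prodWeight v σ * (1 - ∑ l, dev σ l ^ 2 / s ^ 2) := by
        simp only [mul_one_sub (prodWeight v _), sum_sub_distrib, sum_prodWeight_eq_one hv.2,
          mul_sum]
        rw [sum_comm]
        simp only [← mul_div_assoc, ← sum_div, dev, sum_prodWeight_mul_colorCount_sub_sq hv.2]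
    _ ≤ ∑ σ, prodWeight v σ * if σ ∈ typicalSet ι v s then 1 else 0 :=
        sum_le_sum fun σ _ => mul_le_mul_of_nonneg_left (hindicator σ) (prodWeight_nonneg hv.1 σ)
    _ = ∑ σ ∈ typicalSet ι v s, prodWeight v σ := by
        simp only [mul_ite, mul_one, mul_zero, sum_ite_mem, univ_inter]

lemma three_quarters_le_sum_prodWeight_typicalSet {v : κ → ℝ} (hv : v ∈ stdSimplex ℝ κ) {N : ℕ}
    (hN : 0 < N) (hcard : Fintype.card ι ≤ N) :
    3 / 4 ≤ ∑ σ ∈ typicalSet ι v (2 * √N), prodWeight v σ := by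
  have hN0 : (0 : ℝ) < N := Nat.cast_pos.2 hN
  refine le_trans ?_ (one_sub_le_sum_prodWeight_typicalSet hv (by positivity))
  have hfrac : (Fintype.card ι : ℝ) / (2 * √N) ^ 2 ≤ 1 / 4 := by
    rw [mul_pow, Real.sq_sqrt hN0.le, div_le_div_iff₀ (by positivity) (by norm_num)]
    linarith [Nat.cast_le (α := ℝ) |>.2 hcard]
  linarith

lemma disjoint_typicalSet [Nonempty ι] {v v' : κ → ℝ} {ε : ℝ} {l : κ}
    (hl : 2 * ε < |v l - v' l|) :
    Disjoint (typicalSet ι v (ε * Fintype.card ι)) (typicalSet ι v' (ε * Fintype.card ι)) := by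
  refine disjoint_left.2 fun σ hσ hσ' => ?_
  have hcard : (0 : ℝ) < Fintype.card ι := Nat.cast_pos.2 Fintype.card_pos
  have hdist := abs_sub_le (Fintype.card ι * v l) (colorCount σ l) (Fintype.card ι * v' l)
  rw [abs_sub_comm _ (colorCount σ l : ℝ), ← mul_sub, abs_mul, abs_of_pos hcard] at hdist
  nlinarith [mem_typicalSet.1 hσ l, mem_typicalSet.1 hσ' l]

lemma sum_prodWeight_typicalSet_le [Nonempty ι] {v v' : κ → ℝ} (hv' : v' ∈ stdSimplex ℝ κ)
    {ε : ℝ} (hε : 0 < ε) {l : κ} (hl : 2 * ε < |v l - v' l|) :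
    ∑ σ ∈ typicalSet ι v (ε * Fintype.card ι), prodWeight v' σ
      ≤ 1 / (ε ^ 2 * Fintype.card ι) := by
  have hcard : (0 : ℝ) < Fintype.card ι := Nat.cast_pos.2 Fintype.card_pos
  have htypical := one_sub_le_sum_prodWeight_typicalSet (ι := ι) hv' (mul_pos hε hcard)
  have htotal := sum_prodWeight_subset_le_one hv'
    ((typicalSet ι v (ε * Fintype.card ι)).disjUnion _ (disjoint_typicalSet hl))
  rw [sum_disjUnion] at htotal
  have hfrac : (Fintype.card ι : ℝ) / (ε * Fintype.card ι) ^ 2 = 1 / (ε ^ 2 * Fintype.card ι) := by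
    field_simp
  linarith

end TypicalSet

section Fluctuations

variable {κ : Type*} [DecidableEq κ]

/-- The weight `v` with mass `s` moved from the colour `l₁` to the colour `l₀`. -/
def transfer (v : κ → ℝ) (l₀ l₁ : κ) (s : ℝ) : κ → ℝ := v + Pi.single l₀ s - Pi.single l₁ s

lemma transfer_mem_stdSimplex [Fintype κ] {v : κ → ℝ} (hv : v ∈ stdSimplex ℝ κ) {l₀ l₁ : κ}
    (hl : l₁ ≠ l₀) {s : ℝ} (hs : 0 ≤ s) (hsv : s ≤ v l₁) : transfer v l₀ l₁ s ∈ stdSimplex ℝ κ := by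
  refine ⟨fun l => ?_, ?_⟩
  · have hvl := hv.1 l
    simp only [transfer, Pi.sub_apply, Pi.add_apply, Pi.single_apply]
    grind
  · simp [transfer, sum_sub_distrib, sum_add_distrib, hv.2]

lemma sum_transfer_sq_div [Fintype κ] {v : κ → ℝ} (hv : ∀ l, 0 < v l) (hv1 : ∑ l, v l = 1)
    {l₀ l₁ : κ} (hl : l₁ ≠ l₀) (s : ℝ) :
    ∑ l, transfer v l₀ l₁ s l ^ 2 / v l = 1 + s ^ 2 * (1 / v l₀ + 1 / v l₁) := by
  have hterm (l : κ) : transfer v l₀ l₁ s l ^ 2 / v l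
      = v l + ((Pi.single l₀ (2 * s + s ^ 2 / v l₀) : κ → ℝ) l
        + (Pi.single l₁ (-(2 * s) + s ^ 2 / v l₁) : κ → ℝ) l) := by
    have := (hv l).ne'
    simp only [transfer, Pi.sub_apply, Pi.add_apply, Pi.single_apply]
    split_ifs with h₀ h₁ h₁
    · exact absurd (h₁.symm.trans h₀) hl
    all_goals subst_vars; field_simp; ring
  simp only [hterm, sum_add_distrib, hv1, sum_pi_single', mem_univ, if_true]
  ring

lemma abs_transfer_sub_le (v : κ → ℝ) {l₀ l₁ : κ} (hl : l₁ ≠ l₀) {s : ℝ} (hs : 0 ≤ s) (l : κ) :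
    |transfer v l₀ l₁ s l - v l| ≤ s := by
  simp only [transfer, Pi.sub_apply, Pi.add_apply, Pi.single_apply]
  grind

lemma transfer_self (v : κ → ℝ) {l₀ l₁ : κ} (hl : l₁ ≠ l₀) (s : ℝ) :
    transfer v l₀ l₁ s l₀ = v l₀ + s := by
  simp [transfer, hl.symm]

/-- The configurations whose colour counts are all within `b` of their expected values under the
product measure with marginal `v`, the count of the colour `l₀` being off by at least `a`. -/
noncomputable def fluctuationSet [Fintype κ] (ι : Type*) [Fintype ι] [DecidableEq ι] (v : κ → ℝ)
    (l₀ : κ) (a b : ℝ) : Finset (ι → κ) :=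
  (typicalSet ι v b).filter fun σ => a ≤ |(colorCount σ l₀ : ℝ) - Fintype.card ι * v l₀|

lemma typicalSet_transfer_subset_fluctuationSet [Fintype κ] {ι : Type*} [Fintype ι]
    [DecidableEq ι] (v : κ → ℝ) {l₀ l₁ : κ} (hl : l₁ ≠ l₀) {s a b r : ℝ} (hs : 0 ≤ s)
    (ha : a + r ≤ Fintype.card ι * s) (hb : Fintype.card ι * s + r ≤ b) :
    typicalSet ι (transfer v l₀ l₁ s) r ⊆ fluctuationSet ι v l₀ a b := by
  intro σ hσ
  rw [mem_typicalSet] at hσ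
  refine mem_filter.2 ⟨mem_typicalSet.2 fun l => ?_, ?_⟩
  · have hshift : |(Fintype.card ι : ℝ) * transfer v l₀ l₁ s l - Fintype.card ι * v l|
        ≤ Fintype.card ι * s := by
      rw [← mul_sub, abs_mul, Nat.abs_cast]
      exact mul_le_mul_of_nonneg_left (abs_transfer_sub_le v hl hs l) (Nat.cast_nonneg _)
    linarith [hσ l, abs_sub_le (colorCount σ l : ℝ) (Fintype.card ι * transfer v l₀ l₁ s l)
      (Fintype.card ι * v l)]
  · have hl₀ := abs_le.1 (hσ l₀)
    rw [transfer_self v hl] at hl₀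
    exact le_abs.2 (Or.inl (by linarith [hl₀.1]))

lemma three_quarters_le_sum_prodWeight_transfer [Fintype κ] {v : κ → ℝ} (hv : v ∈ stdSimplex ℝ κ)
    {l₀ l₁ : κ} (hl : l₁ ≠ l₀) {k : ℕ} (hk : 0 < k) {A b : ℝ} (hA : 0 ≤ A)
    (hv₁ : (A + 2) / √k ≤ v l₁) (hb : (A + 4) * √k ≤ b) :
    3 / 4 ≤ ∑ τ ∈ fluctuationSet (Fin k) v l₀ (A * √k) b,
      prodWeight (transfer v l₀ l₁ ((A + 2) / √k)) τ := by
  have : (0 : ℝ) < k := Nat.cast_pos.2 hk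
  have hu := transfer_mem_stdSimplex hv hl (s := (A + 2) / √k) (by positivity) hv₁
  have htypical := three_quarters_le_sum_prodWeight_typicalSet (ι := Fin k) hu hk
    (Fintype.card_fin k).le
  have hshift : (Fintype.card (Fin k) : ℝ) * ((A + 2) / √k) = (A + 2) * √k := by
    rw [Fintype.card_fin, ← mul_div_assoc, mul_comm (k : ℝ), mul_div_assoc, Real.div_sqrt]
  have hsubset := typicalSet_transfer_subset_fluctuationSet (ι := Fin k) v hl
    (s := (A + 2) / √k) (a := A * √k) (b := b) (r := 2 * √k) (by positivity)
    (by rw [hshift]; linarith) (by rw [hshift]; linarith)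
  exact htypical.trans
    (sum_le_sum_of_subset_of_nonneg hsubset fun σ _ _ => prodWeight_nonneg hu.1 σ)

-- The event is typical for the product of a tilt of `v` by a multiple of `1 / √k`, and the
-- `χ²`-divergence of the two products stays bounded as `k → ∞`.
lemma exists_le_sum_prodWeight_fluctuationSet [Fintype κ] [Nontrivial κ] {v : κ → ℝ}
    (hv : ∀ l, 0 < v l) (hv1 : ∑ l, v l = 1) (l₀ : κ) {A ε : ℝ} (hA : 0 ≤ A) (hε : 0 < ε) :
    ∃ b > 0, ∀ᶠ k : ℕ in atTop,
      b ≤ ∑ τ ∈ fluctuationSet (Fin k) v l₀ (A * √k) (ε * k), prodWeight v τ := by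
  obtain ⟨l₁, hl⟩ := exists_ne l₀
  let x := (A + 2) ^ 2 * (1 / v l₀ + 1 / v l₁)
  have hsqrt : Tendsto (fun k : ℕ => √(k : ℝ)) atTop atTop :=
    tendsto_sqrt_atTop.comp tendsto_natCast_atTop_atTop
  refine ⟨9 / 16 / Real.exp x, by positivity, ?_⟩
  filter_upwards [eventually_gt_atTop 0, hsqrt.eventually_ge_atTop ((A + 2) / v l₁),
    hsqrt.eventually_ge_atTop ((A + 4) / ε)] with k hk hk₁ hkε
  have hk0 : (0 : ℝ) < k := Nat.cast_pos.2 hk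
  have hsqrt0 : 0 < √(k : ℝ) := Real.sqrt_pos.2 hk0
  rw [div_le_iff₀ (hv l₁), mul_comm, ← div_le_iff₀ hsqrt0] at hk₁
  rw [div_le_iff₀ hε] at hkε
  have htilted := three_quarters_le_sum_prodWeight_transfer ⟨fun l => (hv l).le, hv1⟩ hl hk hA hk₁
    (b := ε * k) (by nlinarith [Real.mul_self_sqrt hk0.le])
  have hchange := sq_sum_prodWeight_le (u := transfer v l₀ l₁ ((A + 2) / √k)) hv
    (fluctuationSet (Fin k) v l₀ (A * √k) (ε * k))
  have hchi : (∑ l, transfer v l₀ l₁ ((A + 2) / √k) l ^ 2 / v l) ^ k ≤ Real.exp x := by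
    have hexp : Real.exp x = Real.exp (x / k) ^ k := by
      rw [← Real.exp_nat_mul, mul_div_cancel₀ _ hk0.ne']
    rw [sum_transfer_sq_div hv hv1 hl, div_pow, Real.sq_sqrt hk0.le, div_mul_eq_mul_div, hexp]
    have := hv l₀
    have := hv l₁
    gcongr
    linarith [Real.add_one_le_exp (x / k)]
  rw [Fintype.card_fin] at hchange
  rw [div_le_iff₀' (Real.exp_pos _)]
  calc (9 / 16 : ℝ) = (3 / 4) ^ 2 := by norm_num
    _ ≤ _ := pow_le_pow_left₀ (by norm_num) htilted 2
    _ ≤ _ := hchange.trans (mul_le_mul_of_nonneg_right hchi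
      (sum_nonneg fun σ _ => (prodWeight_pos hv σ).le))

end Fluctuations

/-! ### Relative entropy -/

section RelEnt

open InformationTheory Topology

lemma klFun_le_sq {x : ℝ} (hx : 0 ≤ x) : klFun x ≤ (x - 1) ^ 2 := by
  rw [klFun_apply]
  rcases hx.eq_or_lt with rfl | hx
  · norm_num
  · nlinarith [mul_le_mul_of_nonneg_left (Real.log_le_sub_one_of_pos hx) hx.le]

lemma sq_div_le_klFun {x : ℝ} (hx : 0 < x) : (x - 1) ^ 2 / (1 + max x 1) ≤ klFun x := by
  rw [klFun_apply]
  rcases le_total 1 x with h | h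
  · have hlog := Real.le_log_one_add_of_nonneg (sub_nonneg.2 h)
    rw [add_sub_cancel, div_le_iff₀ (by linarith)] at hlog
    rw [max_eq_left h, div_le_iff₀ (by linarith)]
    nlinarith
  · have hsinh := Real.self_le_sinh_iff.2 (neg_nonneg.2 (Real.log_nonpos hx.le h))
    rw [Real.sinh_eq, neg_neg, Real.exp_neg, Real.exp_log hx] at hsinh
    have hmul := mul_le_mul_of_nonneg_left hsinh hx.le
    rw [mul_div_assoc', mul_sub, mul_inv_cancel₀ hx.ne'] at hmul
    rw [max_eq_right h, div_le_iff₀ (by norm_num)]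
    nlinarith

lemma eventually_mul_sq_le_klFun {a : ℝ} (ha : a < 1 / 2) :
    ∀ᶠ x in 𝓝 1, a * (x - 1) ^ 2 ≤ klFun x := by
  have hcont : ContinuousAt (fun x : ℝ => 1 / (1 + max x 1)) 1 :=
    continuousAt_const.div (by fun_prop) (by norm_num)
  filter_upwards [hcont.eventually_const_lt (u := a) (by norm_num; linarith),
    eventually_gt_nhds one_pos] with x hax hx
  calc a * (x - 1) ^ 2 ≤ 1 / (1 + max x 1) * (x - 1) ^ 2 :=
        mul_le_mul_of_nonneg_right hax.le (sq_nonneg _)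
    _ = (x - 1) ^ 2 / (1 + max x 1) := by ring
    _ ≤ klFun x := sq_div_le_klFun hx

variable {α β : Type*} [Fintype α]

lemma relEnt_eq_sum_mul_klFun {f g : α → ℝ} (hg : ∀ x, 0 < g x) (hfg : ∑ x, f x = ∑ x, g x) :
    relEnt f g = ∑ x, g x * klFun (f x / g x) := by
  have hterm (x : α) : g x * klFun (f x / g x) = f x * Real.log (f x / g x) + g x - f x := by
    have := (hg x).ne'
    rw [klFun_apply]
    field_simp
  simp only [hterm, sum_sub_distrib, sum_add_distrib, relEnt]
  linarith

lemma relEnt_le_sum_sq_div {f g : α → ℝ} (hf : ∀ x, 0 ≤ f x) (hg : ∀ x, 0 < g x)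
    (hfg : ∑ x, f x = ∑ x, g x) : relEnt f g ≤ ∑ x, (f x - g x) ^ 2 / g x := by
  rw [relEnt_eq_sum_mul_klFun hg hfg]
  refine sum_le_sum fun x _ => ?_
  have hgx := hg x
  calc g x * klFun (f x / g x) ≤ g x * (f x / g x - 1) ^ 2 := by
        gcongr
        exact klFun_le_sq (div_nonneg (hf x) hgx.le)
    _ = (f x - g x) ^ 2 / g x := by field_simp

lemma eventually_mul_sum_sq_div_le_relEnt {g : α → ℝ} (hg : ∀ x, 0 < g x) {a : ℝ}
    (ha : a < 1 / 2) :
    ∀ᶠ f in 𝓝 g, ∑ x, f x = ∑ x, g x → a * ∑ x, (f x - g x) ^ 2 / g x ≤ relEnt f g := by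
  have hratio (x : α) : Tendsto (fun f : α → ℝ => f x / g x) (𝓝 g) (𝓝 1) := by
    have := (continuous_apply x).div_const (g x) |>.tendsto g
    rwa [div_self (hg x).ne'] at this
  filter_upwards [eventually_all.2 fun x => (hratio x).eventually (eventually_mul_sq_le_klFun ha)]
    with f hf hfg
  rw [relEnt_eq_sum_mul_klFun hg hfg, mul_sum]
  refine sum_le_sum fun x _ => ?_
  have hgx := hg x
  calc a * ((f x - g x) ^ 2 / g x) = g x * (a * (f x / g x - 1) ^ 2) := by field_simp
    _ ≤ g x * klFun (f x / g x) := mul_le_mul_of_nonneg_left (hf x) hgx.le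

-- One half of the Donsker–Varadhan variational formula, with `h` in place of its logarithm.
lemma sum_mul_log_add_sum_sub_sum_le_relEnt {f g h : α → ℝ} (hf : ∀ x, 0 ≤ f x)
    (hg : ∀ x, 0 < g x) (hh : ∀ x, 0 ≤ h x) (hfh : ∀ x, h x = 0 → f x = 0) :
    ∑ x, f x * Real.log (h x) + ∑ x, f x - ∑ x, g x * h x ≤ relEnt f g := by
  rw [relEnt, ← sum_add_distrib, ← sum_sub_distrib]
  refine sum_le_sum fun x _ => ?_
  rcases (hf x).eq_or_lt with hfx | hfx
  · simp only [← hfx, zero_mul, zero_add, zero_sub, neg_nonpos]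
    exact mul_nonneg (hg x).le (hh x)
  have hgx := hg x
  have hhx : 0 < h x := (hh x).lt_of_ne fun h0 => hfx.ne' (hfh x h0.symm)
  have hlog := mul_le_mul_of_nonneg_left
    (Real.log_le_sub_one_of_pos (show 0 < g x * h x / f x by positivity)) hfx.le
  rw [Real.log_div (by positivity) hfx.ne', Real.log_mul hgx.ne' hhx.ne', mul_sub_one,
    mul_div_cancel₀ _ hfx.ne'] at hlog
  rw [Real.log_div hfx.ne' hgx.ne']
  linarith

lemma log_two_mul_sum_sub_sum_le_relEnt {f g : α → ℝ} (hf : ∀ x, 0 ≤ f x) (hg : ∀ x, 0 < g x)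
    (hfg : ∑ x, f x = ∑ x, g x) (E : Finset α) :
    Real.log 2 * ∑ x ∈ E, f x - ∑ x ∈ E, g x ≤ relEnt f g := by
  classical
  have h := sum_mul_log_add_sum_sub_sum_le_relEnt (h := fun x => if x ∈ E then 2 else 1) hf hg
    (fun x => by positivity) (fun x hx => by split_ifs at hx <;> norm_num at hx)
  have hmul (x : α) : g x * (if x ∈ E then 2 else 1) = g x + if x ∈ E then g x else 0 := by
    split_ifs <;> ring
  simp only [apply_ite Real.log, Real.log_one, mul_ite, mul_zero, sum_ite_mem, univ_inter,
    ← sum_mul] at h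
  simp only [← mul_ite, hmul, sum_add_distrib, sum_ite_mem, univ_inter] at h
  linarith

variable [DecidableEq β]

/-- The image under `p` of the measure on a finite type with point weights `f`. -/
def pushforward (p : α → β) (f : α → ℝ) (y : β) : ℝ := ∑ x with p x = y, f x

lemma pushforward_nonneg {f : α → ℝ} (hf : ∀ x, 0 ≤ f x) (p : α → β) (y : β) :
    0 ≤ pushforward p f y :=
  sum_nonneg fun x _ => hf x

lemma le_pushforward {f : α → ℝ} (hf : ∀ x, 0 ≤ f x) (p : α → β) (x : α) :
    f x ≤ pushforward p f (p x) :=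
  single_le_sum (fun x _ => hf x) (mem_filter.2 ⟨mem_univ x, rfl⟩)

variable [Fintype β]

lemma sum_pushforward_mul (p : α → β) (f : α → ℝ) (φ : β → ℝ) :
    ∑ y, pushforward p f y * φ y = ∑ x, f x * φ (p x) := by
  simp only [pushforward, sum_mul]
  rw [← sum_fiberwise univ p]
  exact sum_congr rfl fun y _ => sum_congr rfl fun x hx => by rw [(mem_filter.1 hx).2]

lemma sum_pushforward (p : α → β) (f : α → ℝ) : ∑ y, pushforward p f y = ∑ x, f x := by
  simpa using sum_pushforward_mul p f 1

lemma relEnt_pushforward_le {f g : α → ℝ} (hf : ∀ x, 0 ≤ f x) (hg : ∀ x, 0 < g x) (p : α → β) :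
    relEnt (pushforward p f) (pushforward p g) ≤ relEnt f g := by
  have hgpos (x : α) : 0 < pushforward p g (p x) :=
    (hg x).trans_le (le_pushforward (fun x => (hg x).le) p x)
  have h := sum_mul_log_add_sum_sub_sum_le_relEnt
    (h := fun x => pushforward p f (p x) / pushforward p g (p x)) hf hg
    (fun x => div_nonneg (pushforward_nonneg hf p _) (hgpos x).le)
    (fun x hx => ((le_pushforward hf p x).trans_eq
      ((div_eq_zero_iff.1 hx).resolve_right (hgpos x).ne')).antisymm (hf x))
  have hmass : ∑ x, g x * (pushforward p f (p x) / pushforward p g (p x)) = ∑ x, f x := by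
    rw [← sum_pushforward_mul p g fun y => pushforward p f y / pushforward p g y,
      ← sum_pushforward p f]
    refine sum_congr rfl fun y _ => ?_
    by_cases hy : ∃ x, p x = y
    · obtain ⟨x, rfl⟩ := hy
      exact mul_div_cancel₀ _ (hgpos x).ne'
    · have hempty : (univ.filter fun x => p x = y) = ∅ :=
        filter_eq_empty_iff.2 fun x _ hx => hy ⟨x, hx⟩
      simp only [pushforward, hempty, sum_empty, zero_mul]
  rw [← sum_pushforward_mul p f fun y => Real.log (pushforward p f y / pushforward p g y),
    hmass] at h
  exact le_of_add_le_of_nonneg_left (by simpa [relEnt] using h) le_rfl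

end RelEnt

/-! ### Empirical measures and Laplace's method -/

section GaussianSums

lemma summable_exp_neg_mul_int_sq {b : ℝ} (hb : 0 < b) :
    Summable fun z : ℤ => Real.exp (-(b * (z : ℝ) ^ 2)) := by
  refine (summable_pow_mul_jacobiTheta₂_term_bound 0 (div_pos hb Real.pi_pos) 0).congr fun z => ?_
  field_simp
  simp

lemma sum_exp_neg_mul_sum_sq_le {κ : Type*} [Fintype κ] {b : ℝ} (hb : 0 < b)
    (s : Finset (κ → ℤ)) :
    ∑ z ∈ s, Real.exp (-(b * ∑ l, (z l : ℝ) ^ 2))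
      ≤ (∑' z : ℤ, Real.exp (-(b * (z : ℝ) ^ 2))) ^ Fintype.card κ := by
  classical
  let t (l : κ) : Finset ℤ := s.image fun z => z l
  have hsubset : s ⊆ Fintype.piFinset t := fun z hz =>
    Fintype.mem_piFinset.2 fun l => mem_image_of_mem (fun z => z l) hz
  calc ∑ z ∈ s, Real.exp (-(b * ∑ l, (z l : ℝ) ^ 2))
      = ∑ z ∈ s, ∏ l, Real.exp (-(b * (z l : ℝ) ^ 2)) := by
        simp only [mul_sum, ← sum_neg_distrib, Real.exp_sum]
    _ ≤ ∑ z ∈ Fintype.piFinset t, ∏ l, Real.exp (-(b * (z l : ℝ) ^ 2)) :=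
        sum_le_sum_of_subset_of_nonneg hsubset fun z _ _ =>
          prod_nonneg fun l _ => (Real.exp_pos _).le
    _ = ∏ l, ∑ z ∈ t l, Real.exp (-(b * (z : ℝ) ^ 2)) :=
        (prod_univ_sum t fun _ (z : ℤ) => Real.exp (-(b * (z : ℝ) ^ 2))).symm
    _ ≤ ∏ _l : κ, ∑' z : ℤ, Real.exp (-(b * (z : ℝ) ^ 2)) :=
        prod_le_prod (fun l _ => sum_nonneg fun z _ => (Real.exp_pos _).le) fun l _ =>
          (summable_exp_neg_mul_int_sq hb).sum_le_tsum _ fun z _ => (Real.exp_pos _).le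
    _ = _ := by rw [prod_const, card_univ]

end GaussianSums

section Empirical

variable {ι κ : Type*} [Fintype ι] [DecidableEq κ]

/-- The empirical measure of a configuration, i.e. its magnetization: the proportions of sites
carrying each colour. -/
noncomputable def empirical (σ : ι → κ) (l : κ) : ℝ := colorCount σ l / Fintype.card ι

lemma empirical_nonneg (σ : ι → κ) (l : κ) : 0 ≤ empirical σ l := by
  unfold empirical; positivity

variable [Nonempty ι]

lemma card_mul_empirical (σ : ι → κ) (l : κ) : Fintype.card ι * empirical σ l = colorCount σ l :=
  mul_div_cancel₀ _ (Nat.cast_ne_zero.2 Fintype.card_ne_zero)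

lemma empirical_apply_pos (σ : ι → κ) (i : ι) : 0 < empirical σ (σ i) :=
  div_pos (Nat.cast_pos.2 (card_pos.2 ⟨i, mem_filter.2 ⟨mem_univ i, rfl⟩⟩))
    (Nat.cast_pos.2 Fintype.card_pos)

variable [Fintype κ]

lemma empirical_mem_stdSimplex (σ : ι → κ) : empirical σ ∈ stdSimplex ℝ κ := by
  refine ⟨empirical_nonneg σ, ?_⟩
  simp only [empirical, ← sum_div, ← Nat.cast_sum, sum_colorCount]
  exact div_self (Nat.cast_ne_zero.2 Fintype.card_ne_zero)

lemma abs_colorCount_sub_le (v : κ → ℝ) (σ : ι → κ) (l : κ) :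
    |(colorCount σ l : ℝ) - Fintype.card ι * v l| ≤ Fintype.card ι * ‖empirical σ - v‖ := by
  rw [← card_mul_empirical, ← mul_sub, abs_mul, Nat.abs_cast]
  gcongr
  exact norm_le_pi_norm (empirical σ - v) l

lemma card_mul_norm_empirical_sub_le [DecidableEq ι] {v : κ → ℝ} {s : ℝ} (hs : 0 ≤ s) {σ : ι → κ}
    (hσ : σ ∈ typicalSet ι v s) : Fintype.card ι * ‖empirical σ - v‖ ≤ s := by
  have hcard : (0 : ℝ) < Fintype.card ι := Nat.cast_pos.2 Fintype.card_pos
  rw [← le_div_iff₀' hcard]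
  refine (pi_norm_le_iff_of_nonneg (by positivity)).2 fun l => ?_
  rw [le_div_iff₀' hcard, Real.norm_eq_abs, Pi.sub_apply, ← Nat.abs_cast, ← abs_mul, mul_sub,
    card_mul_empirical]
  exact mem_typicalSet.1 hσ l

lemma prodWeight_empirical {u : κ → ℝ} (hu : ∀ l, 0 < u l) (σ : ι → κ) :
    prodWeight (empirical σ) σ
      = prodWeight u σ * Real.exp (Fintype.card ι * relEnt (empirical σ) u) := by
  have hexponent : Fintype.card ι * relEnt (empirical σ) u
      = ∑ i, Real.log (empirical σ (σ i) / u (σ i)) := by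
    rw [sum_comp_eq_sum_colorCount_mul fun l => Real.log (empirical σ l / u l), relEnt, mul_sum]
    simp only [← mul_assoc, card_mul_empirical]
  rw [hexponent, Real.exp_sum, prodWeight, prodWeight, ← prod_mul_distrib]
  refine prod_congr rfl fun i _ => ?_
  rw [Real.exp_log (div_pos (empirical_apply_pos σ i) (hu _)), mul_div_cancel₀ _ (hu _).ne']

/-- The cell, in a grid of mesh of order one after rescaling by `√(card ι)`, of the deviation of
the empirical measure of `σ` from `v`. -/
noncomputable def fluctuationCell (v : κ → ℝ) (σ : ι → κ) (l : κ) : ℤ :=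
  ⌊√(Fintype.card ι : ℝ) * (empirical σ l - v l)⌋

lemma card_mul_relEnt_empirical_le {v : κ → ℝ} {δ : ℝ} (hδ : 0 < δ) {σ σ' : ι → κ}
    (hσ' : ∀ l, δ ≤ empirical σ' l) (h : fluctuationCell v σ = fluctuationCell v σ') :
    Fintype.card ι * relEnt (empirical σ) (empirical σ') ≤ Fintype.card κ / δ := by
  have hpos (l : κ) : 0 < empirical σ' l := hδ.trans_le (hσ' l)
  have hclose (l : κ) : Fintype.card ι * (empirical σ l - empirical σ' l) ^ 2 ≤ 1 := by
    have habs := (Int.abs_sub_lt_one_of_floor_eq_floor (congrFun h l)).le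
    rw [← mul_sub, sub_sub_sub_cancel_right] at habs
    rwa [← sq_le_one_iff_abs_le_one, mul_pow, Real.sq_sqrt (Nat.cast_nonneg _)] at habs
  have hchi := relEnt_le_sum_sq_div (empirical_nonneg σ) hpos
    ((empirical_mem_stdSimplex σ).2.trans (empirical_mem_stdSimplex σ').2.symm)
  calc Fintype.card ι * relEnt (empirical σ) (empirical σ')
      ≤ ∑ l, Fintype.card ι * (empirical σ l - empirical σ' l) ^ 2 / empirical σ' l := by
        simp only [mul_div_assoc, ← mul_sum]
        gcongr
    _ ≤ ∑ _l : κ, 1 / δ := by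
        gcongr with l
        · exact hclose l
        · exact hσ' l
    _ = Fintype.card κ / δ := by simp [div_eq_mul_inv]

lemma sum_fluctuationCell_sq_le (v : κ → ℝ) (σ : ι → κ) :
    ∑ l, (fluctuationCell v σ l : ℝ) ^ 2
      ≤ 2 * Fintype.card κ * (Fintype.card ι * ‖empirical σ - v‖ ^ 2 + 1) := by
  have hcoord (l : κ) : (fluctuationCell v σ l : ℝ) ^ 2
      ≤ 2 * (Fintype.card ι * ‖empirical σ - v‖ ^ 2 + 1) := by
    have hnorm : Fintype.card ι * (empirical σ l - v l) ^ 2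
        ≤ Fintype.card ι * ‖empirical σ - v‖ ^ 2 := by
      rw [← sq_abs (empirical σ l - v l)]
      gcongr
      exact norm_le_pi_norm (empirical σ - v) l
    let x : ℝ := √(Fintype.card ι : ℝ) * (empirical σ l - v l)
    have hx : x ^ 2 = Fintype.card ι * (empirical σ l - v l) ^ 2 := by
      rw [mul_pow, Real.sq_sqrt (Nat.cast_nonneg _)]
    have hfract : Int.fract x ^ 2 ≤ 1 := pow_le_one₀ (Int.fract_nonneg x) (Int.fract_lt_one x).le
    have hfloor : (fluctuationCell v σ l : ℝ) = x - Int.fract x := (Int.self_sub_fract x).symm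
    rw [hfloor]
    linarith [add_sq x (Int.fract x), sub_sq x (Int.fract x), sq_nonneg (x + Int.fract x)]
  refine (sum_le_sum fun l _ => hcoord l).trans_eq ?_
  rw [sum_const, card_univ, nsmul_eq_mul]
  ring

variable [DecidableEq ι]

lemma sum_prodWeight_empirical_le :
    ∑ σ : ι → κ, prodWeight (empirical σ) σ
      ≤ ((Fintype.card ι : ℝ) + 1) ^ Fintype.card κ := by
  have hmaps (σ : ι → κ) :
      colorCount σ ∈ Fintype.piFinset fun _ : κ => range (Fintype.card ι + 1) :=
    Fintype.mem_piFinset.2 fun l => mem_range_succ_iff.2 (colorCount_le_card σ l)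
  have htype (n : κ → ℕ) : ∑ σ : ι → κ with colorCount σ = n, prodWeight (empirical σ) σ ≤ 1 := by
    by_cases hn : ∃ σ : ι → κ, colorCount σ = n
    · obtain ⟨σ₀, rfl⟩ := hn
      refine le_of_eq_of_le (sum_congr rfl fun σ hσ => ?_)
        (sum_prodWeight_subset_le_one (empirical_mem_stdSimplex σ₀) _)
      have hemp : empirical σ = empirical σ₀ := by
        funext l
        rw [empirical, (mem_filter.1 hσ).2, empirical]
      rw [hemp]
    · rw [filter_eq_empty_iff.2 fun σ _ hσ => hn ⟨σ, hσ⟩, sum_empty]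
      exact zero_le_one
  calc ∑ σ : ι → κ, prodWeight (empirical σ) σ
      = ∑ n ∈ Fintype.piFinset fun _ : κ => range (Fintype.card ι + 1),
          ∑ σ : ι → κ with colorCount σ = n, prodWeight (empirical σ) σ :=
        (sum_fiberwise_of_maps_to (fun σ _ => hmaps σ) _).symm
    _ ≤ ((Fintype.card ι : ℝ) + 1) ^ Fintype.card κ := by
        refine (sum_le_card_nsmul _ _ 1 fun n _ => htype n).trans_eq ?_
        simp

lemma sum_prodWeight_empirical_fluctuationCell_le (v : κ → ℝ) {δ : ℝ} (hδ : 0 < δ) (z : κ → ℤ) :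
    ∑ σ : ι → κ with (∀ l, δ ≤ empirical σ l) ∧ fluctuationCell v σ = z, prodWeight (empirical σ) σ
      ≤ Real.exp (Fintype.card κ / δ) := by
  rcases (univ.filter fun σ : ι → κ => (∀ l, δ ≤ empirical σ l) ∧ fluctuationCell v σ = z
    ).eq_empty_or_nonempty with hempty | ⟨σ₀, hσ₀⟩
  · rw [hempty, sum_empty]
    positivity
  obtain ⟨hbulk, rfl⟩ := (mem_filter.1 hσ₀).2
  have hpos (l : κ) : 0 < empirical σ₀ l := hδ.trans_le (hbulk l)
  calc _ ≤ ∑ σ : ι → κ with (∀ l, δ ≤ empirical σ l) ∧ fluctuationCell v σ = fluctuationCell v σ₀,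
          prodWeight (empirical σ₀) σ * Real.exp (Fintype.card κ / δ) := by
        refine sum_le_sum fun σ hσ => ?_
        rw [prodWeight_empirical hpos]
        have := prodWeight_pos hpos σ
        gcongr
        exact card_mul_relEnt_empirical_le hδ hbulk (mem_filter.1 hσ).2.2
    _ ≤ Real.exp (Fintype.card κ / δ) := by
        rw [← sum_mul]
        exact mul_le_of_le_one_left (Real.exp_pos _).le
          (sum_prodWeight_subset_le_one (empirical_mem_stdSimplex σ₀) _)

lemma sum_prodWeight_empirical_mul_exp_le_of_le [Nonempty κ] (v : κ → ℝ) {c δ : ℝ} (hc : 0 < c)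
    (hδ : 0 < δ) :
    ∑ σ : ι → κ with ∀ l, δ ≤ empirical σ l,
        prodWeight (empirical σ) σ * Real.exp (-(c * (Fintype.card ι * ‖empirical σ - v‖ ^ 2)))
      ≤ Real.exp c * Real.exp (Fintype.card κ / δ) *
        (∑' z : ℤ, Real.exp (-(c / (2 * Fintype.card κ) * (z : ℝ) ^ 2))) ^ Fintype.card κ := by
  have : (0 : ℝ) < Fintype.card κ := Nat.cast_pos.2 Fintype.card_pos
  have hcell (σ : ι → κ) : Real.exp (-(c * (Fintype.card ι * ‖empirical σ - v‖ ^ 2)))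
      ≤ Real.exp c * Real.exp
        (-(c / (2 * Fintype.card κ) * ∑ l, (fluctuationCell v σ l : ℝ) ^ 2)) := by
    rw [← Real.exp_add, Real.exp_le_exp]
    have := mul_le_mul_of_nonneg_left (sum_fluctuationCell_sq_le v σ)
      (show 0 ≤ c / (2 * Fintype.card κ) by positivity)
    rw [← mul_assoc, div_mul_cancel₀ _ (by positivity)] at this
    linarith
  calc _ = ∑ z ∈ univ.image (fluctuationCell (ι := ι) v), ∑ σ : ι → κ with
          (∀ l, δ ≤ empirical σ l) ∧ fluctuationCell v σ = z, prodWeight (empirical σ) σ *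
            Real.exp (-(c * (Fintype.card ι * ‖empirical σ - v‖ ^ 2))) := by
        simp only [← filter_filter]
        exact (sum_fiberwise_of_maps_to (g := fluctuationCell (ι := ι) v)
          (fun σ _ => mem_image_of_mem _ (mem_univ σ)) _).symm
    _ ≤ ∑ z ∈ univ.image (fluctuationCell (ι := ι) v), Real.exp (Fintype.card κ / δ) *
          (Real.exp c * Real.exp (-(c / (2 * Fintype.card κ) * ∑ l, (z l : ℝ) ^ 2))) := by
        refine sum_le_sum fun z _ => ?_
        refine le_trans ?_ (mul_le_mul_of_nonneg_right
          (sum_prodWeight_empirical_fluctuationCell_le (ι := ι) v hδ z) (by positivity))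
        rw [sum_mul]
        refine sum_le_sum fun σ hσ => ?_
        rw [← (mem_filter.1 hσ).2.2]
        exact mul_le_mul_of_nonneg_left (hcell σ) (prodWeight_nonneg (empirical_nonneg σ) σ)
    _ ≤ _ := by
        rw [← mul_sum, ← mul_sum, ← mul_assoc, mul_comm (Real.exp c)]
        gcongr
        exact sum_exp_neg_mul_sum_sq_le (by positivity) _

lemma sum_prodWeight_empirical_mul_exp_le_of_lt {v : κ → ℝ} {c δ : ℝ} (hc : 0 < c) (hδ : 0 < δ)
    (hv : ∀ l, 2 * δ ≤ v l) :
    ∑ σ : ι → κ with ¬∀ l, δ ≤ empirical σ l,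
        prodWeight (empirical σ) σ * Real.exp (-(c * (Fintype.card ι * ‖empirical σ - v‖ ^ 2)))
      ≤ (Fintype.card κ).factorial / (c * δ ^ 2) ^ Fintype.card κ * Real.exp (c * δ ^ 2) := by
  have hfar (σ : ι → κ) (hσ : ¬∀ l, δ ≤ empirical σ l) : δ ≤ ‖empirical σ - v‖ := by
    obtain ⟨l, hl⟩ := not_forall.1 hσ
    have hnorm := norm_le_pi_norm (empirical σ - v) l
    rw [Real.norm_eq_abs, Pi.sub_apply, abs_sub_comm] at hnorm
    linarith [hv l, le_abs_self (v l - empirical σ l)]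
  have hexp := Real.pow_div_factorial_le_exp
    (c * δ ^ 2 * (Fintype.card ι + 1)) (by positivity) (Fintype.card κ)
  calc _ ≤ ∑ σ : ι → κ with ¬∀ l, δ ≤ empirical σ l,
          prodWeight (empirical σ) σ * Real.exp (-(c * (Fintype.card ι * δ ^ 2))) := by
        refine sum_le_sum fun σ hσ => mul_le_mul_of_nonneg_left ?_
          (prodWeight_nonneg (empirical_nonneg σ) σ)
        gcongr
        exact hfar σ (mem_filter.1 hσ).2
    _ ≤ ((Fintype.card ι : ℝ) + 1) ^ Fintype.card κ *
          Real.exp (-(c * (Fintype.card ι * δ ^ 2))) := by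
        rw [← sum_mul]
        gcongr
        exact (sum_le_univ_sum_of_nonneg fun σ => prodWeight_nonneg (empirical_nonneg σ) σ).trans
          sum_prodWeight_empirical_le
    _ ≤ _ := by
        rw [div_le_iff₀ (by positivity), mul_pow] at hexp
        rw [div_mul_eq_mul_div, le_div_iff₀ (by positivity)]
        calc _ = (c * δ ^ 2) ^ Fintype.card κ * ((Fintype.card ι : ℝ) + 1) ^ Fintype.card κ *
                Real.exp (-(c * (Fintype.card ι * δ ^ 2))) := by ring
          _ ≤ Real.exp (c * δ ^ 2 * (Fintype.card ι + 1)) * (Fintype.card κ).factorial *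
                Real.exp (-(c * (Fintype.card ι * δ ^ 2))) := by gcongr
          _ = _ := by
            rw [mul_right_comm, ← Real.exp_add, mul_comm]
            ring_nf

-- Each grid cell of mesh `1 / √(card ι)` carries a bounded weight, since there `empirical σ` may be
-- replaced, up to a bounded factor, by the empirical measure of one configuration of the cell.
lemma exists_sum_prodWeight_empirical_mul_exp_le [Nonempty κ] {v : κ → ℝ} (hv : ∀ l, 0 < v l)
    {c : ℝ} (hc : 0 < c) :
    ∃ C, ∀ (N : ℕ) [NeZero N], ∑ σ : Fin N → κ,
      prodWeight (empirical σ) σ * Real.exp (-(c * (N * ‖empirical σ - v‖ ^ 2))) ≤ C := by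
  obtain ⟨ε, hε, hεv⟩ := Pi.exists_forall_pos_add_lt hv
  have hδv (l : κ) : 2 * (ε / 2) ≤ v l := by linarith [hεv l]
  have hsum (N : ℕ) [NeZero N] :=
    (sum_filter_add_sum_filter_not univ (fun σ : Fin N → κ => ∀ l, ε / 2 ≤ empirical σ l)
      _).symm.trans_le (add_le_add
        (sum_prodWeight_empirical_mul_exp_le_of_le v hc (half_pos hε))
        (sum_prodWeight_empirical_mul_exp_le_of_lt hc (half_pos hε) hδv))
  simp only [Fintype.card_fin] at hsum
  exact ⟨_, hsum⟩

end Empirical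

/-! ### Mixtures of product measures and marginals -/

section Mixture

variable {ι κ J : Type*} [Fintype ι] [Fintype J]

/-- The mixture, with weights proportional to `w`, of the products of the marginals `V j`. -/
noncomputable def productMixture (w : J → ℝ) (V : J → κ → ℝ) (σ : ι → κ) : ℝ :=
  (∑ j, w j)⁻¹ * ∑ j, w j * prodWeight (V j) σ

variable {w : J → ℝ} {V : J → κ → ℝ}

lemma mul_prodWeight_le_productMixture (hw : ∀ j, 0 < w j) (hV : ∀ j l, 0 < V j l) (j : J)
    (σ : ι → κ) : (∑ i, w i)⁻¹ * (w j * prodWeight (V j) σ) ≤ productMixture w V σ :=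
  mul_le_mul_of_nonneg_left
    (single_le_sum (f := fun i => w i * prodWeight (V i) σ)
      (fun i _ => (mul_pos (hw i) (prodWeight_pos (hV i) σ)).le) (mem_univ j))
    (inv_nonneg.2 (sum_nonneg fun i _ => (hw i).le))

variable [Nonempty J]

lemma productMixture_pos (hw : ∀ j, 0 < w j) (hV : ∀ j l, 0 < V j l) (σ : ι → κ) :
    0 < productMixture w V σ :=
  mul_pos (inv_pos.2 (sum_pos (fun j _ => hw j) univ_nonempty))
    (sum_pos (fun j _ => mul_pos (hw j) (prodWeight_pos (hV j) σ)) univ_nonempty)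

lemma sum_productMixture_le (hw : ∀ j, 0 < w j) (E : Finset (ι → κ)) {b : ℝ}
    (hb : ∀ j, ∑ σ ∈ E, prodWeight (V j) σ ≤ b) : ∑ σ ∈ E, productMixture w V σ ≤ b := by
  simp only [productMixture, ← mul_sum]
  rw [sum_comm, inv_mul_le_iff₀ (sum_pos (fun j _ => hw j) univ_nonempty), sum_mul]
  simp only [← mul_sum]
  exact sum_le_sum fun j _ => mul_le_mul_of_nonneg_left (hb j) (hw j).le

lemma sum_productMixture [Fintype κ] [DecidableEq ι] (hw : ∀ j, 0 < w j)
    (hV : ∀ j, ∑ l, V j l = 1) : ∑ σ : ι → κ, productMixture w V σ = 1 := by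
  simp only [productMixture, ← mul_sum]
  rw [sum_comm]
  simp only [← mul_sum, sum_prodWeight_eq_one (hV _), mul_one]
  exact inv_mul_cancel₀ (sum_pos (fun j _ => hw j) univ_nonempty).ne'

end Mixture

section Marginal

variable {κ : Type*}

lemma prodWeight_append {k m : ℕ} (v : κ → ℝ) (τ : Fin k → κ) (τ' : Fin m → κ) :
    prodWeight v (Fin.append τ τ') = prodWeight v τ * prodWeight v τ' := by
  simp only [prodWeight, Fin.prod_univ_add, Fin.append_left, Fin.append_right]

variable [DecidableEq κ]

lemma colorCount_append {k m : ℕ} (τ : Fin k → κ) (τ' : Fin m → κ) (l : κ) :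
    colorCount (Fin.append τ τ') l = colorCount τ l + colorCount τ' l := by
  simp only [colorCount, card_filter, Fin.sum_univ_add, Fin.append_left, Fin.append_right]

variable [Fintype κ]

/-- The joint law of the first `k` coordinates under the law `f` of `N` coordinates. -/
def marginal {k N : ℕ} (h : k ≤ N) (f : (Fin N → κ) → ℝ) : (Fin k → κ) → ℝ :=
  pushforward (fun σ i => σ (Fin.castLE h i)) f

lemma marginal_apply {k N : ℕ} (h : k ≤ N) (f : (Fin N → κ) → ℝ) (τ : Fin k → κ) :
    marginal h f τ = ∑ σ, if ∀ i, σ (Fin.castLE h i) = τ i then f σ else 0 := by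
  simp only [marginal, pushforward, sum_filter, funext_iff]

lemma marginal_eq_sum_append {k m : ℕ} (f : (Fin (k + m) → κ) → ℝ) (τ : Fin k → κ) :
    marginal (Nat.le_add_right k m) f τ = ∑ τ' : Fin m → κ, f (Fin.append τ τ') := by
  have hleft (τ₁ : Fin k → κ) (τ₂ : Fin m → κ) :
      (fun i => Fin.append τ₁ τ₂ (Fin.castLE (Nat.le_add_right k m) i)) = τ₁ :=
    funext fun i => Fin.append_left τ₁ τ₂ i
  rw [marginal, pushforward, sum_filter, ← (Fin.appendEquiv k m).sum_comp, Fintype.sum_prod_type]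
  simp only [Fin.appendEquiv, Equiv.coe_fn_mk, hleft, sum_ite_irrel, sum_const_zero, sum_ite_eq',
    mem_univ, if_true]

lemma append_mem_fluctuationSet {k m : ℕ} {v : κ → ℝ} {l₀ : κ} {a b s : ℝ} {τ : Fin k → κ}
    {τ' : Fin m → κ} (hτ : τ ∈ fluctuationSet (Fin k) v l₀ a b)
    (hτ' : τ' ∈ typicalSet (Fin m) v s) :
    Fin.append τ τ' ∈ fluctuationSet (Fin (k + m)) v l₀ (a - s) (b + s) := by
  obtain ⟨hclose, hfar⟩ := mem_filter.1 hτ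
  rw [mem_typicalSet] at hclose hτ'
  have hsplit (l : κ) : (colorCount (Fin.append τ τ') l : ℝ) - Fintype.card (Fin (k + m)) * v l
      = ((colorCount τ l : ℝ) - Fintype.card (Fin k) * v l)
        + ((colorCount τ' l : ℝ) - Fintype.card (Fin m) * v l) := by
    simp only [colorCount_append, Fintype.card_fin, Nat.cast_add]
    ring
  refine mem_filter.2 ⟨mem_typicalSet.2 fun l => ?_, ?_⟩
  · rw [hsplit]
    exact (abs_add_le _ _).trans (add_le_add (hclose l) (hτ' l))
  · rw [hsplit]
    have htriangle := abs_add_le ((colorCount τ l₀ : ℝ) - Fintype.card (Fin k) * v l₀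
      + ((colorCount τ' l₀ : ℝ) - Fintype.card (Fin m) * v l₀))
      (-((colorCount τ' l₀ : ℝ) - Fintype.card (Fin m) * v l₀))
    rw [add_neg_cancel_right, abs_neg] at htriangle
    linarith [hτ' l₀]

variable {k N : ℕ} (h : k ≤ N)

lemma marginal_prodWeight {v : κ → ℝ} (hv1 : ∑ l, v l = 1) (τ : Fin k → κ) :
    marginal h (prodWeight v) τ = prodWeight v τ := by
  obtain ⟨m, rfl⟩ := Nat.exists_eq_add_of_le h
  simp only [marginal_eq_sum_append, prodWeight_append, ← mul_sum, sum_prodWeight_eq_one hv1,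
    mul_one]

lemma marginal_productMixture {J : Type*} [Fintype J] (w : J → ℝ) {V : J → κ → ℝ}
    (hV : ∀ j, ∑ l, V j l = 1) : marginal h (productMixture w V) = productMixture w V := by
  funext τ
  simp only [productMixture, ← marginal_prodWeight h (hV _), marginal, pushforward, mul_sum]
  rw [sum_comm]

end Marginal

/-! ### Gibbs measures -/

section Gibbs

variable {ι κ : Type*} [Fintype ι]

/-- The Shannon entropy `-∑ l, m l * log (m l)`. -/
noncomputable def entropy [Fintype κ] (m : κ → ℝ) : ℝ := ∑ l, Real.negMulLog (m l)

/-- The functional `F + entropy` whose maximizers carry the Gibbs measure in the limit. -/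
noncomputable def freeEnergy [Fintype κ] (F : (κ → ℝ) → ℝ) (m : κ → ℝ) : ℝ := F m + entropy m

lemma freeEnergy_eq_add_neg_sum [Fintype κ] (F : (κ → ℝ) → ℝ) (m : κ → ℝ) :
    freeEnergy F m = F m + -∑ l, m l * Real.log (m l) := by
  simp only [freeEnergy, entropy, Real.negMulLog, neg_mul, sum_neg_distrib]

lemma relEnt_one [Fintype κ] (m : κ → ℝ) : relEnt m 1 = -entropy m := by
  simp [relEnt, entropy, Real.negMulLog]

variable [DecidableEq κ]

/-- The unnormalized Gibbs weight `exp (N * F m)` of a configuration of `N` sites with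
magnetization `m`. -/
noncomputable def gibbsWeight (F : (κ → ℝ) → ℝ) (σ : ι → κ) : ℝ :=
  Real.exp (Fintype.card ι * F (empirical σ))

lemma gibbsWeight_pos (F : (κ → ℝ) → ℝ) (σ : ι → κ) : 0 < gibbsWeight F σ := Real.exp_pos _

variable [Fintype κ]

lemma gibbsWeight_eq_exp_mul_prodWeight_empirical [Nonempty ι] (F : (κ → ℝ) → ℝ) (σ : ι → κ) :
    gibbsWeight F σ
      = Real.exp (Fintype.card ι * freeEnergy F (empirical σ)) * prodWeight (empirical σ) σ := by
  rw [prodWeight_empirical (u := 1) (fun _ => one_pos), relEnt_one, prodWeight,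
    prod_congr rfl fun i _ => Pi.one_apply (σ i), prod_const_one, one_mul, ← Real.exp_add,
    gibbsWeight, freeEnergy]
  ring_nf

lemma gibbsWeight_eq_exp_mul_prodWeight [Nonempty ι] (F : (κ → ℝ) → ℝ) {v : κ → ℝ}
    (hv : ∀ l, 0 < v l) (σ : ι → κ) :
    gibbsWeight F σ = Real.exp (Fintype.card ι *
      (freeEnergy F (empirical σ) + relEnt (empirical σ) v)) * prodWeight v σ := by
  rw [gibbsWeight_eq_exp_mul_prodWeight_empirical, prodWeight_empirical hv, mul_add, Real.exp_add]
  ring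

variable [DecidableEq ι]

/-- The normalizing constant of the Gibbs weights of the configurations on `ι`. -/
noncomputable def partitionFunction (ι : Type*) [Fintype ι] [DecidableEq ι] (F : (κ → ℝ) → ℝ) :
    ℝ := ∑ σ : ι → κ, gibbsWeight F σ

/-- The mean-field Gibbs measure with interaction `F` on the configurations on `ι`. -/
noncomputable def gibbsMeasure (F : (κ → ℝ) → ℝ) (σ : ι → κ) : ℝ :=
  gibbsWeight F σ / partitionFunction ι F

lemma gibbsMeasure_fin_apply (F : (κ → ℝ) → ℝ) {N : ℕ} (σ : Fin N → κ) :
    gibbsMeasure F σ = Real.exp (N * F fun l => (#{i | σ i = l} : ℝ) / N) /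
      ∑ σ : Fin N → κ, Real.exp (N * F fun l => (#{i | σ i = l} : ℝ) / N) := by
  have hempirical (σ : Fin N → κ) : empirical σ = fun l => (#{i | σ i = l} : ℝ) / N :=
    funext fun l => by rw [empirical, Fintype.card_fin, colorCount]
  simp only [gibbsMeasure, partitionFunction, gibbsWeight, hempirical, Fintype.card_fin]

variable [Nonempty κ] (F : (κ → ℝ) → ℝ)

lemma partitionFunction_pos : 0 < partitionFunction ι F :=
  sum_pos (fun σ _ => gibbsWeight_pos F σ) univ_nonempty

lemma gibbsMeasure_pos (σ : ι → κ) : 0 < gibbsMeasure F σ :=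
  div_pos (gibbsWeight_pos F σ) (partitionFunction_pos F)

lemma sum_gibbsMeasure : ∑ σ : ι → κ, gibbsMeasure F σ = 1 := by
  simp only [gibbsMeasure, ← sum_div]
  exact div_self (partitionFunction_pos F).ne'

end Gibbs

section Concentration

open Topology

variable {κ J : Type*} [Fintype κ]

/-- The points `V j` have positive coordinates, and the free energy falls short of `g` by at least
a quadratic function of the distance to the nearest of them. -/
structure HasQuadraticWells (F : (κ → ℝ) → ℝ) (V : J → κ → ℝ) (g : ℝ) : Prop where
  pos : ∀ j l, 0 < V j l
  sum_eq_one : ∀ j, ∑ l, V j l = 1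
  exists_mul_sq_le : ∃ c > 0, ∀ m ∈ stdSimplex ℝ κ, ∃ j, c * ‖m - V j‖ ^ 2 ≤ g - freeEnergy F m

variable {F : (κ → ℝ) → ℝ} {V : J → κ → ℝ} {v : κ → ℝ} {g : ℝ}

lemma HasQuadraticWells.mem_stdSimplex (hV : HasQuadraticWells F V g) (j : J) :
    V j ∈ stdSimplex ℝ κ :=
  ⟨fun l => (hV.pos j l).le, hV.sum_eq_one j⟩

lemma HasQuadraticWells.freeEnergy_le (hV : HasQuadraticWells F V g) {m : κ → ℝ}
    (hm : m ∈ stdSimplex ℝ κ) : freeEnergy F m ≤ g := by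
  obtain ⟨c, hc, hgrowth⟩ := hV.exists_mul_sq_le
  obtain ⟨j, hj⟩ := hgrowth m hm
  exact sub_nonneg.1 ((by positivity : 0 ≤ c * ‖m - V j‖ ^ 2).trans hj)

/-- Near `v` the Gibbs weight exceeds, by a factor at least exponential in the squared distance to
`v`, a multiple `exp (N * g)` of the weight of the product measure with marginal `v`. -/
def OutweighsProduct (F : (κ → ℝ) → ℝ) (v : κ → ℝ) (g : ℝ) : Prop :=
  ∃ η > 0, ∀ᶠ m in 𝓝[stdSimplex ℝ κ] v, g + η * ‖m - v‖ ^ 2 ≤ freeEnergy F m + relEnt m v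

variable [DecidableEq κ]

lemma OutweighsProduct.exists_exp_mul_prodWeight_le (h : OutweighsProduct F v g)
    (hv : ∀ l, 0 < v l) :
    ∃ η > 0, ∃ r > 0, ∀ (N : ℕ) [NeZero N] (σ : Fin N → κ), ‖empirical σ - v‖ < r →
      Real.exp (N * (g + η * ‖empirical σ - v‖ ^ 2)) * prodWeight v σ ≤ gibbsWeight F σ := by
  obtain ⟨η, hη, hnear⟩ := h
  obtain ⟨r, hr, hball⟩ := Metric.mem_nhdsWithin_iff.1 hnear
  refine ⟨η, hη, r, hr, fun N _ σ hσ => ?_⟩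
  have hm := hball ⟨mem_ball_iff_norm.2 hσ, empirical_mem_stdSimplex σ⟩
  rw [gibbsWeight_eq_exp_mul_prodWeight F hv, Fintype.card_fin]
  exact mul_le_mul_of_nonneg_right (Real.exp_le_exp.2
    (mul_le_mul_of_nonneg_left hm (Nat.cast_nonneg _))) (prodWeight_pos hv σ).le

variable [Nonempty κ] [Finite J]

lemma HasQuadraticWells.exists_sum_gibbsWeight_mul_exp_le (hV : HasQuadraticWells F V g) :
    ∃ C > 0, ∀ (N : ℕ) [NeZero N], ∑ σ : Fin N → κ,
      gibbsWeight F σ * Real.exp (N * (g - freeEnergy F (empirical σ)) / 2)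
        ≤ C * Real.exp (N * g) := by
  have := Fintype.ofFinite J
  obtain ⟨c, hc, hgrowth⟩ := hV.exists_mul_sq_le
  choose C hC using fun j => exists_sum_prodWeight_empirical_mul_exp_le (hV.pos j) (half_pos hc)
  refine ⟨|∑ j, C j| + 1, by positivity, fun N _ => ?_⟩
  let term (j : J) (σ : Fin N → κ) : ℝ :=
    prodWeight (empirical σ) σ * Real.exp (-(c / 2 * (N * ‖empirical σ - V j‖ ^ 2)))
  have hterm_nonneg (j : J) (σ : Fin N → κ) : 0 ≤ term j σ :=
    mul_nonneg (prodWeight_nonneg (empirical_nonneg σ) σ) (Real.exp_pos _).le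
  have hpointwise (σ : Fin N → κ) :
      gibbsWeight F σ * Real.exp (N * (g - freeEnergy F (empirical σ)) / 2)
        ≤ (∑ j, term j σ) * Real.exp (N * g) := by
    obtain ⟨j, hj⟩ := hgrowth _ (empirical_mem_stdSimplex σ)
    calc _ = prodWeight (empirical σ) σ *
            Real.exp (-(N * (g - freeEnergy F (empirical σ)) / 2)) * Real.exp (N * g) := by
          rw [gibbsWeight_eq_exp_mul_prodWeight_empirical, Fintype.card_fin, mul_assoc, mul_assoc,
            mul_left_comm, ← Real.exp_add, ← Real.exp_add]
          ring_nf
      _ ≤ term j σ * Real.exp (N * g) := by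
          refine mul_le_mul_of_nonneg_right (mul_le_mul_of_nonneg_left (Real.exp_le_exp.2 ?_)
            (prodWeight_nonneg (empirical_nonneg σ) σ)) (Real.exp_pos _).le
          linarith [mul_le_mul_of_nonneg_left hj (Nat.cast_nonneg (α := ℝ) N)]
      _ ≤ _ := mul_le_mul_of_nonneg_right
          (single_le_sum (fun j _ => hterm_nonneg j σ) (mem_univ j)) (Real.exp_pos _).le
  calc _ ≤ ∑ σ, (∑ j, term j σ) * Real.exp (N * g) := sum_le_sum fun σ _ => hpointwise σ
    _ = (∑ j, ∑ σ, term j σ) * Real.exp (N * g) := by rw [← sum_mul, sum_comm]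
    _ ≤ _ := by
      gcongr
      exact (sum_le_sum fun j _ => hC j N).trans ((le_abs_self _).trans (by linarith))

lemma HasQuadraticWells.exists_partitionFunction_le (hV : HasQuadraticWells F V g) :
    ∃ C > 0, ∀ (N : ℕ) [NeZero N], partitionFunction (Fin N) F ≤ C * Real.exp (N * g) := by
  obtain ⟨C, hC, hbound⟩ := hV.exists_sum_gibbsWeight_mul_exp_le
  refine ⟨C, hC, fun N _ => (sum_le_sum fun σ _ => ?_).trans (hbound N)⟩
  refine le_mul_of_one_le_right (gibbsWeight_pos F σ).le (Real.one_le_exp ?_)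
  have := sub_nonneg.2 (hV.freeEnergy_le (empirical_mem_stdSimplex σ))
  positivity

end Concentration

/-! ### Fluctuations under the Gibbs measure -/

section LowerBounds

open Topology

lemma eventually_mul_sqrt_lt_mul (a : ℝ) {r : ℝ} (hr : 0 < r) :
    ∀ᶠ N : ℕ in atTop, a * √N < r * N := by
  filter_upwards [(tendsto_sqrt_atTop.comp tendsto_natCast_atTop_atTop).eventually_gt_atTop (a / r),
    eventually_gt_atTop 0] with N hN hN0
  rw [Function.comp_apply, div_lt_iff₀' hr] at hN
  calc a * √N < r * √N * √N := mul_lt_mul_of_pos_right hN (Real.sqrt_pos.2 (Nat.cast_pos.2 hN0))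
    _ = r * N := by rw [mul_assoc, Real.mul_self_sqrt (Nat.cast_nonneg N)]

variable {κ J : Type*} [Fintype κ] [DecidableEq κ] {F : (κ → ℝ) → ℝ} {v : κ → ℝ} {g : ℝ}

lemma OutweighsProduct.eventually_le_partitionFunction (h : OutweighsProduct F v g)
    (hv : ∀ l, 0 < v l) (hv1 : ∑ l, v l = 1) :
    ∀ᶠ N : ℕ in atTop, 3 / 4 * Real.exp (N * g) ≤ partitionFunction (Fin N) F := by
  obtain ⟨η, hη, r, hr, hweight⟩ := h.exists_exp_mul_prodWeight_le hv
  filter_upwards [eventually_mul_sqrt_lt_mul 2 hr, eventually_gt_atTop 0] with N hNr hN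
  have : NeZero N := ⟨hN.ne'⟩
  have hN0 : (0 : ℝ) < N := Nat.cast_pos.2 hN
  have htypical (σ : Fin N → κ) (hσ : σ ∈ typicalSet (Fin N) v (2 * √N)) :
      prodWeight v σ * Real.exp (N * g) ≤ gibbsWeight F σ := by
    have hdist := card_mul_norm_empirical_sub_le (by positivity) hσ
    rw [Fintype.card_fin] at hdist
    have hclose : ‖empirical σ - v‖ < r :=
      lt_of_mul_lt_mul_left (hdist.trans_lt (hNr.trans_eq (mul_comm r _))) hN0.le
    refine le_trans ?_ (hweight N σ hclose)
    rw [mul_comm]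
    refine mul_le_mul_of_nonneg_right (Real.exp_le_exp.2 ?_) (prodWeight_pos hv σ).le
    exact mul_le_mul_of_nonneg_left (le_add_of_nonneg_right (by positivity)) hN0.le
  calc 3 / 4 * Real.exp (N * g)
      ≤ (∑ σ ∈ typicalSet (Fin N) v (2 * √N), prodWeight v σ) * Real.exp (N * g) :=
        mul_le_mul_of_nonneg_right (three_quarters_le_sum_prodWeight_typicalSet
          ⟨fun l => (hv l).le, hv1⟩ hN (Fintype.card_fin N).le) (Real.exp_pos _).le
    _ ≤ ∑ σ ∈ typicalSet (Fin N) v (2 * √N), gibbsWeight F σ := by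
        rw [sum_mul]
        exact sum_le_sum htypical
    _ ≤ partitionFunction (Fin N) F :=
        sum_le_sum_of_subset_of_nonneg (subset_univ _) fun σ _ _ => (gibbsWeight_pos F σ).le

lemma OutweighsProduct.exists_mul_prodWeight_le_gibbsWeight (h : OutweighsProduct F v g)
    (hv : ∀ l, 0 < v l) (l₀ : κ) {D : ℝ} (hD : 0 ≤ D) :
    ∃ T ≥ 0, ∃ r > 0, ∀ (N : ℕ) [NeZero N] (a b : ℝ), T * √N ≤ a → 0 ≤ b → b < r * N →
      ∀ σ ∈ fluctuationSet (Fin N) v l₀ a b,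
        D * Real.exp (N * g) * prodWeight v σ ≤ gibbsWeight F σ := by
  obtain ⟨η, hη, r, hr, hweight⟩ := h.exists_exp_mul_prodWeight_le hv
  refine ⟨√(D / η), Real.sqrt_nonneg _, r, hr, fun N _ a b ha hb0 hb σ hσ => ?_⟩
  have hN0 : (0 : ℝ) < N := Nat.cast_pos.2 (NeZero.pos N)
  obtain ⟨hclose, hfar⟩ := mem_filter.1 hσ
  have hdist := card_mul_norm_empirical_sub_le hb0 hclose
  have hcount := abs_colorCount_sub_le v σ l₀
  rw [Fintype.card_fin] at hdist hcount hfar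
  have hradius : ‖empirical σ - v‖ < r :=
    lt_of_mul_lt_mul_left (hdist.trans_lt (hb.trans_eq (mul_comm r _))) hN0.le
  have hgain : D ≤ N * (η * ‖empirical σ - v‖ ^ 2) := by
    have hsq := pow_le_pow_left₀ (by positivity) (ha.trans (hfar.trans hcount)) 2
    rw [mul_pow, Real.sq_sqrt (by positivity), Real.sq_sqrt hN0.le, mul_pow, div_mul_eq_mul_div,
      div_le_iff₀ hη] at hsq
    exact le_of_mul_le_mul_right (by linarith) hN0
  refine le_trans ?_ (hweight N σ hradius)
  refine mul_le_mul_of_nonneg_right ?_ (prodWeight_pos hv σ).le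
  rw [mul_add, Real.exp_add, mul_comm]
  refine mul_le_mul_of_nonneg_left ?_ (Real.exp_pos _).le
  linarith [Real.add_one_le_exp (N * (η * ‖empirical σ - v‖ ^ 2))]

lemma mul_prodWeight_le_marginal {k N : ℕ} (hk : k ≤ N) (hN : 0 < N) (hv : ∀ l, 0 < v l)
    (hv1 : ∑ l, v l = 1) {l₀ : κ} {a b D : ℝ} (hD : 0 ≤ D) {f : (Fin N → κ) → ℝ}
    (hf : ∀ σ, 0 ≤ f σ)
    (hfD : ∀ σ ∈ fluctuationSet (Fin N) v l₀ (a - 2 * √N) (b + 2 * √N), D * prodWeight v σ ≤ f σ)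
    {τ : Fin k → κ} (hτ : τ ∈ fluctuationSet (Fin k) v l₀ a b) :
    3 / 4 * D * prodWeight v τ ≤ marginal hk f τ := by
  obtain ⟨m, rfl⟩ := Nat.exists_eq_add_of_le hk
  have htail := three_quarters_le_sum_prodWeight_typicalSet (ι := Fin m)
    ⟨fun l => (hv l).le, hv1⟩ hN ((Fintype.card_fin m).le.trans (Nat.le_add_left m k))
  rw [marginal_eq_sum_append]
  calc 3 / 4 * D * prodWeight v τ = D * prodWeight v τ * (3 / 4) := by ring
    _ ≤ D * prodWeight v τ * ∑ τ' ∈ typicalSet (Fin m) v (2 * √(k + m : ℕ)), prodWeight v τ' :=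
        mul_le_mul_of_nonneg_left htail (mul_nonneg hD (prodWeight_pos hv τ).le)
    _ ≤ ∑ τ' ∈ typicalSet (Fin m) v (2 * √(k + m : ℕ)), f (Fin.append τ τ') := by
        rw [mul_sum]
        refine sum_le_sum fun τ' hτ' => ?_
        rw [mul_assoc, ← prodWeight_append]
        exact hfD _ (append_mem_fluctuationSet hτ hτ')
    _ ≤ ∑ τ', f (Fin.append τ τ') :=
        sum_le_sum_of_subset_of_nonneg (subset_univ _) fun _ _ _ => hf _

variable [Nonempty κ] [Finite J] {V : J → κ → ℝ}

lemma OutweighsProduct.exists_mul_prodWeight_le_gibbsMeasure (h : OutweighsProduct F v g)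
    (hv : ∀ l, 0 < v l) (hV : HasQuadraticWells F V g) (l₀ : κ) {D : ℝ} (hD : 0 ≤ D) :
    ∃ T ≥ 0, ∃ r > 0, ∀ (N : ℕ) [NeZero N] (a b : ℝ), T * √N ≤ a → 0 ≤ b → b < r * N →
      ∀ σ ∈ fluctuationSet (Fin N) v l₀ a b, D * prodWeight v σ ≤ gibbsMeasure F σ := by
  obtain ⟨C, hC, hZ⟩ := hV.exists_partitionFunction_le
  obtain ⟨T, hT, r, hr, hweight⟩ :=
    h.exists_mul_prodWeight_le_gibbsWeight hv l₀ (mul_nonneg hD hC.le)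
  refine ⟨T, hT, r, hr, fun N _ a b ha hb0 hb σ hσ => ?_⟩
  rw [gibbsMeasure, le_div_iff₀ (partitionFunction_pos F)]
  calc D * prodWeight v σ * partitionFunction (Fin N) F
      ≤ D * prodWeight v σ * (C * Real.exp (N * g)) :=
        mul_le_mul_of_nonneg_left (hZ N) (mul_nonneg hD (prodWeight_pos hv σ).le)
    _ = D * C * Real.exp (N * g) * prodWeight v σ := by ring
    _ ≤ gibbsWeight F σ := hweight N a b ha hb0 hb σ hσ

lemma OutweighsProduct.exists_two_mul_prodWeight_le_marginal (h : OutweighsProduct F v g)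
    (hv : ∀ l, 0 < v l) (hv1 : ∑ l, v l = 1) (hV : HasQuadraticWells F V g) (l₀ : κ) {α : ℝ}
    (hα : 0 < α) :
    ∃ A ≥ 0, ∃ r > 0, ∀ᶠ N : ℕ in atTop, ∀ (k : ℕ) (hk : k ≤ N), α * N ≤ k →
      ∀ b : ℝ, 0 ≤ b → b ≤ r * k → ∀ τ ∈ fluctuationSet (Fin k) v l₀ (A * √k) b,
        2 * prodWeight v τ ≤ marginal hk (gibbsMeasure F) τ := by
  obtain ⟨T, hT, r, hr, hmeasure⟩ :=
    h.exists_mul_prodWeight_le_gibbsMeasure hv hV l₀ (D := 8 / 3) (by norm_num)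
  refine ⟨(T + 2) / √α, by positivity, r / 2, by positivity, ?_⟩
  filter_upwards [eventually_mul_sqrt_lt_mul 2 (half_pos hr), eventually_gt_atTop 0]
    with N hNr hN k hk hαk b hb0 hb τ hτ
  have : NeZero N := ⟨hN.ne'⟩
  have hfar : T * √N ≤ (T + 2) / √α * √k - 2 * √N := by
    have hsqrt : √α * √N ≤ √k := by
      rw [← Real.sqrt_mul hα.le]
      exact Real.sqrt_le_sqrt hαk
    have hscale := mul_le_mul_of_nonneg_left hsqrt (by positivity : 0 ≤ (T + 2) / √α)
    rw [← mul_assoc, div_mul_cancel₀ _ (Real.sqrt_pos.2 hα).ne'] at hscale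
    linarith
  have hclose : b + 2 * √N < r * N := by
    have : r / 2 * k ≤ r / 2 * N := by gcongr
    linarith
  have hbound := mul_prodWeight_le_marginal hk hN hv hv1 (by norm_num)
    (fun σ => (gibbsMeasure_pos F σ).le) (hmeasure N _ _ hfar (by positivity) hclose) hτ
  linarith

end LowerBounds

section EventTest

open Topology

lemma eventually_forall_eq_or_two_mul_lt {κ J : Type*} [Finite J] (V : J → κ → ℝ) (v : κ → ℝ) :
    ∀ᶠ ε in 𝓝[>] (0 : ℝ), ∀ j, V j = v ∨ ∃ l, 2 * ε < |v l - V j l| := by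
  refine eventually_all.2 fun j => ?_
  rcases eq_or_ne (V j) v with heq | hne
  · exact Eventually.of_forall fun _ => Or.inl heq
  · obtain ⟨l, hl⟩ := Function.ne_iff.1 hne
    have hdist : 0 < |v l - V j l| / 2 := half_pos (abs_pos.2 (sub_ne_zero.2 hl.symm))
    filter_upwards [Ioo_mem_nhdsGT hdist] with ε hε
    exact Or.inr ⟨l, by linarith [hε.2]⟩

variable {κ J : Type*} [Fintype κ] [DecidableEq κ] [Fintype J]

lemma eventually_sum_productMixture_fluctuationSet_le [Nonempty J] {w : J → ℝ}
    (hw : ∀ j, 0 < w j) {V : J → κ → ℝ} (hV : ∀ j, V j ∈ stdSimplex ℝ κ) {v : κ → ℝ} {ε : ℝ}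
    (hε : 0 < ε) (hsep : ∀ j, V j = v ∨ ∃ l, 2 * ε < |v l - V j l|) {l₀ : κ} {A b : ℝ}
    (hb : 0 < b) :
    ∀ᶠ k : ℕ in atTop, b ≤ ∑ τ ∈ fluctuationSet (Fin k) v l₀ (A * √k) (ε * k), prodWeight v τ →
      ∑ τ ∈ fluctuationSet (Fin k) v l₀ (A * √k) (ε * k), productMixture w V τ
        ≤ ∑ τ ∈ fluctuationSet (Fin k) v l₀ (A * √k) (ε * k), prodWeight v τ := by
  filter_upwards [tendsto_natCast_atTop_atTop.eventually_ge_atTop (1 / (ε ^ 2 * b)),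
    eventually_gt_atTop 0] with k hkb hk hmass
  have : NeZero k := ⟨hk.ne'⟩
  refine sum_productMixture_le hw _ fun j => ?_
  obtain hVj | ⟨l, hl⟩ := hsep j
  · rw [hVj]
  · calc ∑ τ ∈ fluctuationSet (Fin k) v l₀ (A * √k) (ε * k), prodWeight (V j) τ
        ≤ ∑ τ ∈ typicalSet (Fin k) v (ε * k), prodWeight (V j) τ :=
          sum_le_sum_of_subset_of_nonneg (filter_subset _ _) fun τ _ _ =>
            prodWeight_nonneg (hV j).1 τ
      _ ≤ 1 / (ε ^ 2 * k) := by
          simpa only [Fintype.card_fin] using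
            sum_prodWeight_typicalSet_le (ι := Fin k) (hV j) hε hl
      _ ≤ b := by
          rw [div_le_iff₀ (by positivity)] at hkb ⊢
          linarith
      _ ≤ _ := hmass

variable [Nontrivial κ] {F : (κ → ℝ) → ℝ} {V : J → κ → ℝ} {g : ℝ} {w : J → ℝ}

lemma HasQuadraticWells.exists_le_relEnt_marginal (hV : HasQuadraticWells F V g) {j₀ : J}
    (h : OutweighsProduct F (V j₀) g) (hw : ∀ j, 0 < w j) {α : ℝ} (hα : 0 < α) :
    ∃ c > 0, ∀ᶠ N : ℕ in atTop, ∀ (k : ℕ) (hk : k ≤ N), α * N ≤ k →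
      c ≤ relEnt (marginal hk (gibbsMeasure F)) (productMixture w V) := by
  have : Nonempty J := ⟨j₀⟩
  obtain ⟨l₀⟩ := ‹Nontrivial κ›.to_nonempty
  obtain ⟨A, hA, r, hr, hmarginal⟩ :=
    h.exists_two_mul_prodWeight_le_marginal (hV.pos j₀) (hV.sum_eq_one j₀) hV l₀ hα
  obtain ⟨ε, hsep, hε, hεr⟩ :=
    ((eventually_forall_eq_or_two_mul_lt V (V j₀)).and (Ioo_mem_nhdsGT hr)).exists
  obtain ⟨b, hb, hmass⟩ :=
    exists_le_sum_prodWeight_fluctuationSet (hV.pos j₀) (hV.sum_eq_one j₀) l₀ hA hε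
  have hmixture := eventually_sum_productMixture_fluctuationSet_le hw hV.mem_stdSimplex hε hsep
    (l₀ := l₀) (A := A) hb
  obtain ⟨k₀, hk₀⟩ := eventually_atTop.1 (hmass.and hmixture)
  refine ⟨(2 * Real.log 2 - 1) * b,
    mul_pos (by linarith [Real.log_two_gt_d9]) hb, ?_⟩
  filter_upwards [hmarginal, (tendsto_natCast_atTop_atTop.const_mul_atTop hα).eventually_ge_atTop
    (k₀ : ℝ)] with N hN hNk₀ k hk hαk
  obtain ⟨hmass, hmixture⟩ := hk₀ k (Nat.cast_le.1 (hNk₀.trans hαk))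
  set E := fluctuationSet (Fin k) (V j₀) l₀ (A * √k) (ε * k)
  have hmarginalE : 2 * ∑ τ ∈ E, prodWeight (V j₀) τ ≤ ∑ τ ∈ E, marginal hk (gibbsMeasure F) τ := by
    rw [mul_sum]
    exact sum_le_sum (hN k hk hαk _ (by positivity) (by gcongr))
  have htest := log_two_mul_sum_sub_sum_le_relEnt (f := marginal hk (gibbsMeasure F))
    (pushforward_nonneg (fun σ => (gibbsMeasure_pos F σ).le) _)
    (productMixture_pos hw hV.pos)
    (by rw [marginal, sum_pushforward, sum_gibbsMeasure, sum_productMixture hw hV.sum_eq_one]) E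
  calc (2 * Real.log 2 - 1) * b ≤ (2 * Real.log 2 - 1) * ∑ τ ∈ E, prodWeight (V j₀) τ :=
        mul_le_mul_of_nonneg_left hmass (by linarith [Real.log_two_gt_d9])
    _ = Real.log 2 * (2 * ∑ τ ∈ E, prodWeight (V j₀) τ) - ∑ τ ∈ E, prodWeight (V j₀) τ := by ring
    _ ≤ Real.log 2 * ∑ τ ∈ E, marginal hk (gibbsMeasure F) τ - ∑ τ ∈ E, productMixture w V τ :=
        sub_le_sub (mul_le_mul_of_nonneg_left hmarginalE (Real.log_nonneg one_le_two))
          (hmixture hmass)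
    _ ≤ _ := htest

end EventTest

section UpperBound

variable {κ J : Type*} [Fintype κ] {F : (κ → ℝ) → ℝ} {V : J → κ → ℝ} {g : ℝ}

lemma relEnt_le_card_div_mul_norm_sq {m v : κ → ℝ} (hm : m ∈ stdSimplex ℝ κ)
    (hv : v ∈ stdSimplex ℝ κ) {δ : ℝ} (hδ : 0 < δ) (hδv : ∀ l, δ ≤ v l) :
    relEnt m v ≤ Fintype.card κ / δ * ‖m - v‖ ^ 2 := by
  refine (relEnt_le_sum_sq_div hm.1 (fun l => hδ.trans_le (hδv l)) (hm.2.trans hv.2.symm)).trans ?_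
  rw [div_mul_eq_mul_div, mul_div_assoc, ← nsmul_eq_mul]
  refine sum_le_card_nsmul _ _ _ fun l _ => ?_
  refine div_le_div₀ (sq_nonneg _) ?_ hδ (hδv l)
  exact sq_le_sq.2 ((norm_le_pi_norm (m - v) l).trans (le_abs_self _))

lemma HasQuadraticWells.exists_relEnt_le [Finite J] [Nonempty J] [Nonempty κ]
    (hV : HasQuadraticWells F V g) :
    ∃ K ≥ 0, ∀ m ∈ stdSimplex ℝ κ, ∃ j, relEnt m (V j) ≤ K * (g - freeEnergy F m) := by
  obtain ⟨c, hc, hgrowth⟩ := hV.exists_mul_sq_le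
  obtain ⟨⟨j₀, l₀⟩, hmin⟩ := Finite.exists_min fun x : J × κ => V x.1 x.2
  have hδ := hV.pos j₀ l₀
  refine ⟨Fintype.card κ / V j₀ l₀ / c, by positivity, fun m hm => ?_⟩
  obtain ⟨j, hj⟩ := hgrowth m hm
  refine ⟨j, (relEnt_le_card_div_mul_norm_sq hm (hV.mem_stdSimplex j) hδ
    fun l => hmin (j, l)).trans ?_⟩
  rw [div_mul_eq_mul_div _ c, le_div_iff₀ hc, mul_assoc, mul_comm _ c]
  gcongr

variable [DecidableEq κ] [Nonempty κ] [Fintype J] [Nonempty J] {w : J → ℝ}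

lemma HasQuadraticWells.exists_gibbsMeasure_div_le (hV : HasQuadraticWells F V g)
    (hw : ∀ j, 0 < w j) :
    ∃ L > 0, ∃ K ≥ 0, ∀ (N : ℕ) [NeZero N], 3 / 4 * Real.exp (N * g) ≤ partitionFunction (Fin N) F →
      ∀ σ : Fin N → κ, gibbsMeasure F σ / productMixture w V σ
        ≤ L * Real.exp (K * (N * (g - freeEnergy F (empirical σ)))) := by
  obtain ⟨K, hK, hrelEnt⟩ := hV.exists_relEnt_le
  obtain ⟨i, hi⟩ := Finite.exists_min w
  have hwi := hw i
  have hW : 0 < ∑ j, w j := sum_pos (fun j _ => hw j) univ_nonempty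
  refine ⟨4 / 3 * ((∑ j, w j) / w i), by positivity, K, hK, fun N _ hZ σ => ?_⟩
  have hmem := empirical_mem_stdSimplex σ
  obtain ⟨j, hj⟩ := hrelEnt _ hmem
  have hprod := prodWeight_pos (hV.pos j) σ
  have hmix : w i / (∑ j, w j) * prodWeight (V j) σ ≤ productMixture w V σ := by
    refine le_trans ?_ (mul_prodWeight_le_productMixture hw hV.pos j σ)
    rw [div_eq_inv_mul, mul_assoc]
    gcongr
    exact hi j
  have hgibbs : gibbsMeasure F σ ≤ 4 / 3 * prodWeight (V j) σ *
      Real.exp (K * (N * (g - freeEnergy F (empirical σ)))) := by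
    rw [gibbsMeasure, div_le_iff₀ (partitionFunction_pos F)]
    calc gibbsWeight F σ = prodWeight (V j) σ * Real.exp
            (N * (freeEnergy F (empirical σ) + relEnt (empirical σ) (V j))) := by
          rw [gibbsWeight_eq_exp_mul_prodWeight F (hV.pos j), Fintype.card_fin, mul_comm]
      _ ≤ prodWeight (V j) σ * Real.exp
            (K * (N * (g - freeEnergy F (empirical σ))) + N * g) := by
          gcongr
          have := mul_le_mul_of_nonneg_left (add_le_add (hV.freeEnergy_le hmem) hj)
            (Nat.cast_nonneg (α := ℝ) N)
          linarith
      _ = 4 / 3 * prodWeight (V j) σ * Real.exp (K * (N * (g - freeEnergy F (empirical σ)))) *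
            (3 / 4 * Real.exp (N * g)) := by
          rw [Real.exp_add]
          ring
      _ ≤ _ := by gcongr
  refine (div_le_div₀ (by positivity) hgibbs (by positivity) hmix).trans_eq ?_
  field_simp

lemma HasQuadraticWells.exists_relEnt_gibbsMeasure_le (hV : HasQuadraticWells F V g)
    (hw : ∀ j, 0 < w j) :
    ∃ B, ∀ (N : ℕ) [NeZero N], 3 / 4 * Real.exp (N * g) ≤ partitionFunction (Fin N) F →
      relEnt (gibbsMeasure (ι := Fin N) F) (productMixture w V) ≤ B := by
  obtain ⟨L, hL, K, hK, hratio⟩ := hV.exists_gibbsMeasure_div_le hw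
  obtain ⟨C, hC, hlaplace⟩ := hV.exists_sum_gibbsWeight_mul_exp_le
  refine ⟨Real.log L + 2 * K * (4 / 3 * C), fun N _ hZ => ?_⟩
  let deficit (σ : Fin N → κ) : ℝ := N * (g - freeEnergy F (empirical σ))
  have hlog (σ : Fin N → κ) : Real.log (gibbsMeasure F σ / productMixture w V σ)
      ≤ Real.log L + 2 * K * Real.exp (deficit σ / 2) := by
    refine (Real.log_le_log (div_pos (gibbsMeasure_pos F σ) (productMixture_pos hw hV.pos σ))
      (hratio N hZ σ)).trans ?_
    rw [Real.log_mul hL.ne' (Real.exp_ne_zero _), Real.log_exp]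
    have := mul_le_mul_of_nonneg_left (Real.add_one_le_exp (deficit σ / 2)) hK
    linarith
  have hmoment : ∑ σ : Fin N → κ, gibbsMeasure F σ * Real.exp (deficit σ / 2) ≤ 4 / 3 * C := by
    simp only [gibbsMeasure, div_mul_eq_mul_div, ← sum_div]
    rw [div_le_iff₀ (partitionFunction_pos F)]
    refine (hlaplace N).trans ?_
    have := mul_le_mul_of_nonneg_left hZ hC.le
    linarith
  calc relEnt (gibbsMeasure (ι := Fin N) F) (productMixture w V)
      ≤ ∑ σ : Fin N → κ, gibbsMeasure F σ * (Real.log L + 2 * K * Real.exp (deficit σ / 2)) :=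
        sum_le_sum fun σ _ => mul_le_mul_of_nonneg_left (hlog σ) (gibbsMeasure_pos F σ).le
    _ = Real.log L + 2 * K * ∑ σ : Fin N → κ, gibbsMeasure F σ * Real.exp (deficit σ / 2) := by
        simp only [mul_add, sum_add_distrib, ← sum_mul, sum_gibbsMeasure, one_mul, mul_sum]
        simp only [mul_left_comm]
    _ ≤ Real.log L + 2 * K * (4 / 3 * C) := by gcongr

end UpperBound

section Liminf

variable {κ J : Type*} [Fintype κ] [DecidableEq κ] [Nontrivial κ] [Fintype J] {F : (κ → ℝ) → ℝ}
  {V : J → κ → ℝ} {g : ℝ} {w : J → ℝ}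

theorem HasQuadraticWells.liminf_relEnt_marginal_pos (hV : HasQuadraticWells F V g) {j₀ : J}
    (h : OutweighsProduct F (V j₀) g) (hw : ∀ j, 0 < w j) {k : ℕ → ℕ} (hk : ∀ N, k N ≤ N) {α : ℝ}
    (hα : 0 < α) (hkα : ∀ᶠ N : ℕ in atTop, α * N ≤ k N) :
    0 < liminf (fun N => relEnt (marginal (hk N) (gibbsMeasure F)) (productMixture w V)) atTop := by
  have : Nonempty J := ⟨j₀⟩
  obtain ⟨c, hc, hlower⟩ := hV.exists_le_relEnt_marginal h hw hα
  obtain ⟨B, hupper⟩ := hV.exists_relEnt_gibbsMeasure_le hw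
  have hbounded : ∀ᶠ N in atTop,
      relEnt (marginal (hk N) (gibbsMeasure F)) (productMixture w V) ≤ B := by
    filter_upwards [h.eventually_le_partitionFunction (hV.pos j₀) (hV.sum_eq_one j₀),
      eventually_gt_atTop 0] with N hZ hN
    have : NeZero N := ⟨hN.ne'⟩
    rw [← marginal_productMixture (hk N) w hV.sum_eq_one]
    exact (relEnt_pushforward_le (fun σ => (gibbsMeasure_pos F σ).le)
      (productMixture_pos hw hV.pos) _).trans (hupper N hZ)
  refine hc.trans_le (le_liminf_of_le (isBoundedUnder_of_eventually_le hbounded).isCoboundedUnder_ge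
    ?_)
  filter_upwards [hlower, hkα] with N hN hαN using hN (k N) (hk N) hαN

end Liminf

/-! ### Second-order behaviour at critical points -/

section SecondOrder

open Asymptotics Topology

variable {E : Type*} [NormedAddCommGroup E] [NormedSpace ℝ E]

lemma isLittleO_sub_taylor_two {F : Type*} [NormedAddCommGroup F] [NormedSpace ℝ F] {f : E → F}
    {a : E} (hf : ContDiffAt ℝ 2 f a) :
    (fun x => f x - f a - fderiv ℝ f a (x - a) -
      (1 / 2 : ℝ) • fderiv ℝ (fderiv ℝ f) a (x - a) (x - a)) =o[𝓝 a] fun x => ‖x - a‖ ^ 2 := by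
  set D := fderiv ℝ (fderiv ℝ f) a
  have hsymm : IsSymmSndFDerivAt ℝ f a := hf.isSymmSndFDerivAt (by simp)
  have hderiv : HasFDerivAt (fderiv ℝ f) D a :=
    ((hf.fderiv_right (m := 1) le_rfl).differentiableAt one_ne_zero).hasFDerivAt
  have hdiff : ∀ᶠ x in 𝓝 a, DifferentiableAt ℝ f x :=
    (hf.eventually (by simp)).mono fun x hx => hx.differentiableAt two_ne_zero
  refine isLittleO_iff.2 fun ε hε => ?_
  obtain ⟨r, hr, hball⟩ := Metric.eventually_nhds_iff_ball.1 (hdiff.and (hderiv.isLittleO.def hε))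
  filter_upwards [Metric.ball_mem_nhds a hr] with x hx
  have hsegment : segment ℝ a x ⊆ Metric.ball a r :=
    (convex_ball a r).segment_subset (Metric.mem_ball_self hr) hx
  let remainder (y : E) : F := f y - fderiv ℝ f a (y - a) - (1 / 2 : ℝ) • D (y - a) (y - a)
  have hremainder (y : E) (hy : y ∈ segment ℝ a x) : HasFDerivWithinAt remainder
      (fderiv ℝ f y - fderiv ℝ f a - D (y - a)) (segment ℝ a x) y := by
    have hsub : HasFDerivAt (fun y : E => y - a) (ContinuousLinearMap.id ℝ E) y :=
      (hasFDerivAt_id y).sub_const a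
    refine ((((hball y (hsegment hy)).1.hasFDerivAt.sub
      ((fderiv ℝ f a).hasFDerivAt.comp y hsub)).sub
      (((D.hasFDerivAt.comp y hsub).clm_apply hsub).const_smul (1 / 2 : ℝ))).congr_fderiv
      ?_).hasFDerivWithinAt
    ext u
    have : D u (y - a) = D (y - a) u := hsymm.eq u (y - a)
    simp only [sub_apply, smul_apply, add_apply, ContinuousLinearMap.comp_apply,
      ContinuousLinearMap.flip_apply, ContinuousLinearMap.id_apply, Function.comp_apply, this]
    module
  have hbound (y : E) (hy : y ∈ segment ℝ a x) :
      ‖fderiv ℝ f y - fderiv ℝ f a - D (y - a)‖ ≤ ε * ‖x - a‖ :=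
    (hball y (hsegment hy)).2.trans (by gcongr; exact norm_sub_le_of_mem_segment hy)
  have hmvt := (convex_segment a x).norm_image_sub_le_of_norm_hasFDerivWithin_le hremainder hbound
    (left_mem_segment ℝ a x) (right_mem_segment ℝ a x)
  simp only [remainder, sub_self, map_zero, smul_zero, sub_zero] at hmvt
  rw [norm_pow, norm_norm]
  calc _ = _ := by congr 1; abel
    _ ≤ _ := hmvt
    _ = _ := by ring

lemma exists_mul_norm_sq_le [ProperSpace E] {Q : E → ℝ} (hQ : Continuous Q)
    (hsmul : ∀ (t : ℝ) v, Q (t • v) = t ^ 2 * Q v) (hpos : ∀ v ≠ 0, 0 < Q v) :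
    ∃ c > 0, ∀ v, c * ‖v‖ ^ 2 ≤ Q v := by
  obtain ⟨c, hc, hsphere⟩ := (isCompact_sphere (0 : E) 1).exists_forall_le' hQ.continuousOn
    fun v hv => hpos v (ne_zero_of_mem_unit_sphere ⟨v, hv⟩)
  refine ⟨c, hc, fun v => ?_⟩
  rcases eq_or_ne v 0 with rfl | hv
  · have := hsmul 0 0
    simp_all
  · have hunit := hsphere (‖v‖⁻¹ • v) (by simp [norm_smul, hv])
    rwa [hsmul, inv_pow, inv_mul_eq_div, le_div_iff₀ (by positivity)] at hunit

lemma exists_eventually_mul_norm_sq_le_sub_add [ProperSpace E] {G χ : E → ℝ} {a : E}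
    (hG : ContDiffAt ℝ 2 G a) (hG0 : fderiv ℝ G a = 0) (hχ : Continuous χ)
    (hχ_smul : ∀ (t : ℝ) v, χ (t • v) = t ^ 2 * χ v)
    (hpos : ∀ v ≠ 0, 0 < χ v + fderiv ℝ (fderiv ℝ G) a v v) :
    ∃ b < 1 / 2, ∃ η > 0, ∀ᶠ x in 𝓝 a, η * ‖x - a‖ ^ 2 ≤ G x - G a + b * χ (x - a) := by
  set D := fderiv ℝ (fderiv ℝ G) a
  obtain ⟨c, hc, hcoercive⟩ := exists_mul_norm_sq_le (Q := fun v => χ v + D v v) (by fun_prop)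
    (fun t v => by simp only [hχ_smul, map_smul, smul_apply, smul_eq_mul]; ring)
    hpos
  let δ := c / (2 * (c + ‖D‖))
  have hδ : 0 < δ := by positivity
  have hδ1 : δ ≤ 1 / 2 := by
    rw [div_le_div_iff₀ (by positivity) two_pos]
    linarith [norm_nonneg D]
  have hδD : δ * (c + ‖D‖) = c / 2 := by
    have : c + ‖D‖ ≠ 0 := by positivity
    simp only [δ]
    field_simp
  refine ⟨(1 - δ) / 2, by linarith, c / 8, by positivity, ?_⟩
  filter_upwards [(isLittleO_sub_taylor_two hG).def (by positivity : 0 < c / 8)] with x hx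
  have hD : -(‖D‖ * ‖x - a‖ ^ 2) ≤ D (x - a) (x - a) := by
    have := D.le_opNorm₂ (x - a) (x - a)
    rw [mul_assoc, ← sq] at this
    exact neg_le_of_abs_le this
  rw [hG0, zero_apply, sub_zero, smul_eq_mul, norm_pow, norm_norm,
    Real.norm_eq_abs] at hx
  have hlower := mul_le_mul_of_nonneg_left (hcoercive (x - a)) (by linarith : 0 ≤ 1 - δ)
  have hupper := mul_le_mul_of_nonneg_left hD hδ.le
  have hscale : δ * (c + ‖D‖) * ‖x - a‖ ^ 2 = c / 2 * ‖x - a‖ ^ 2 := by rw [hδD]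
  linarith [neg_le_of_abs_le hx]

end SecondOrder

section CompactGrowth

open Topology

lemma exists_forall_exists_mul_dist_sq_le {X J : Type*} [PseudoMetricSpace X] [Nonempty J]
    {s : Set X} (hs : IsCompact s) {f : X → ℝ} (hf : ContinuousOn f s) {V : J → X} {g : ℝ}
    (hlocal : ∀ j, ∃ c > 0, ∀ᶠ x in 𝓝[s] V j, c * dist x (V j) ^ 2 ≤ g - f x)
    (hlt : ∀ x ∈ s, x ∉ Set.range V → f x < g) :
    ∃ c > 0, ∀ x ∈ s, ∃ j, c * dist x (V j) ^ 2 ≤ g - f x := by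
  refine hs.induction_on (p := fun t => ∃ c > 0, ∀ x ∈ t, ∃ j, c * dist x (V j) ^ 2 ≤ g - f x)
    ⟨1, one_pos, by simp⟩ ?_ ?_ fun x hx => ?_
  · rintro t t' htt' ⟨c, hc, h⟩
    exact ⟨c, hc, fun x hx => h x (htt' hx)⟩
  · rintro t t' ⟨c, hc, h⟩ ⟨c', hc', h'⟩
    refine ⟨min c c', lt_min hc hc', ?_⟩
    rintro x (hx | hx)
    · obtain ⟨j, hj⟩ := h x hx
      exact ⟨j, le_trans (by gcongr; exact min_le_left c c') hj⟩
    · obtain ⟨j, hj⟩ := h' x hx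
      exact ⟨j, le_trans (by gcongr; exact min_le_right c c') hj⟩
  · by_cases hxV : x ∈ Set.range V
    · obtain ⟨j, rfl⟩ := hxV
      obtain ⟨c, hc, hlocal⟩ := hlocal j
      exact ⟨_, hlocal, c, hc, fun y hy => ⟨j, hy⟩⟩
    · obtain ⟨j⟩ := ‹Nonempty J›
      have hgap := sub_pos.2 (hlt x hx hxV)
      have hcont : ContinuousWithinAt
          (fun y => g - f y - (g - f x) / (2 * (dist x (V j) ^ 2 + 1)) * dist y (V j) ^ 2) s x :=
        (continuousWithinAt_const.sub (hf x hx)).sub (by fun_prop)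
      have hx_pos : 0 < g - f x - (g - f x) / (2 * (dist x (V j) ^ 2 + 1)) * dist x (V j) ^ 2 := by
        rw [sub_pos, div_mul_eq_mul_div, div_lt_iff₀ (by positivity)]
        gcongr
        linarith [sq_nonneg (dist x (V j))]
      exact ⟨_, hcont.eventually_const_lt hx_pos, _, by positivity, fun y hy =>
        ⟨j, (sub_pos.1 hy).le⟩⟩

end CompactGrowth

/-! ### Solid simplex coordinates -/

section SolidSimplex

open Topology

variable {d : ℕ}

/-- The solid simplex `Δ̂`, which parametrizes the standard simplex by its first `d` coordinates. -/
def solidSimplex (d : ℕ) : Set (Fin d → ℝ) := {x | (∀ k, 0 ≤ x k) ∧ ∑ k, x k ≤ 1}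

/-- The point with coordinate sum `1` whose first `d` coordinates are `x`. -/
def simplexLift (x : Fin d → ℝ) : Fin (d + 1) → ℝ := Fin.snoc x (1 - ∑ k, x k)

/-- The linear part of `simplexLift`: the vector with coordinate sum `0` whose first `d`
coordinates are `y`. -/
def tangentLift (y : Fin d → ℝ) : Fin (d + 1) → ℝ := Fin.snoc y (-∑ k, y k)

@[simp]
lemma simplexLift_castSucc (x : Fin d → ℝ) (i : Fin d) : simplexLift x i.castSucc = x i := by
  simp [simplexLift]

@[simp]
lemma simplexLift_last (x : Fin d → ℝ) : simplexLift x (Fin.last d) = 1 - ∑ k, x k := by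
  simp [simplexLift]

@[simp]
lemma tangentLift_castSucc (y : Fin d → ℝ) (i : Fin d) : tangentLift y i.castSucc = y i := by
  simp [tangentLift]

@[simp]
lemma tangentLift_last (y : Fin d → ℝ) : tangentLift y (Fin.last d) = -∑ k, y k := by
  simp [tangentLift]

lemma sum_simplexLift (x : Fin d → ℝ) : ∑ l, simplexLift x l = 1 := by
  simp [Fin.sum_univ_castSucc]

lemma sum_tangentLift (y : Fin d → ℝ) : ∑ l, tangentLift y l = 0 := by
  simp [Fin.sum_univ_castSucc]

lemma simplexLift_add (x y : Fin d → ℝ) :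
    simplexLift (x + y) = simplexLift x + tangentLift y := by
  ext l
  refine Fin.lastCases ?_ (fun i => ?_) l
  · simp only [simplexLift_last, tangentLift_last, Pi.add_apply, sum_add_distrib]
    ring
  · simp

lemma tangentLift_smul (t : ℝ) (y : Fin d → ℝ) : tangentLift (t • y) = t • tangentLift y := by
  ext l
  refine Fin.lastCases ?_ (fun i => ?_) l <;> simp [mul_sum]

lemma tangentLift_sub (x y : Fin d → ℝ) :
    tangentLift (x - y) = simplexLift x - simplexLift y := by
  rw [eq_sub_iff_add_eq', ← simplexLift_add, add_sub_cancel]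

lemma continuous_tangentLift : Continuous (tangentLift (d := d)) :=
  Continuous.finSnoc (A := fun _ => ℝ) continuous_id
    (by fun_prop : Continuous fun y : Fin d → ℝ => -∑ k, y k)

lemma contDiff_simplexLift {n : WithTop ℕ∞} : ContDiff ℝ n (simplexLift (d := d)) := by
  refine contDiff_pi.2 fun l => Fin.lastCases ?_ (fun i => ?_) l
  · simp only [simplexLift_last]
    fun_prop
  · simp only [simplexLift_castSucc]
    fun_prop

lemma norm_tangentLift_le (y : Fin d → ℝ) : ‖tangentLift y‖ ≤ (d + 1) * ‖y‖ := by
  refine (pi_norm_le_iff_of_nonneg (by positivity)).2 fun l => Fin.lastCases ?_ (fun i => ?_) l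
  · rw [tangentLift_last, norm_neg]
    calc ‖∑ k, y k‖ ≤ ∑ _k : Fin d, ‖y‖ := norm_sum_le_of_le _ fun k _ => norm_le_pi_norm y k
      _ ≤ (d + 1) * ‖y‖ := by
        rw [sum_const, card_univ, Fintype.card_fin, nsmul_eq_mul]
        gcongr
        linarith
  · rw [tangentLift_castSucc]
    exact (norm_le_pi_norm y i).trans (le_mul_of_one_le_left (norm_nonneg y) (by simp))

lemma simplexLift_mem_stdSimplex_iff {x : Fin d → ℝ} :
    simplexLift x ∈ stdSimplex ℝ (Fin (d + 1)) ↔ x ∈ solidSimplex d := by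
  simp [stdSimplex, solidSimplex, sum_simplexLift, Fin.forall_fin_succ']

lemma simplexLift_init {m : Fin (d + 1) → ℝ} (hm : ∑ l, m l = 1) :
    simplexLift (Fin.init m) = m := by
  rw [Fin.sum_univ_castSucc] at hm
  ext l
  refine Fin.lastCases ?_ (fun i => ?_) l
  · simp only [simplexLift_last, Fin.init]
    linarith
  · simp [Fin.init]

lemma tendsto_init_nhdsWithin_simplexLift (x : Fin d → ℝ) :
    Tendsto (fun m : Fin (d + 1) → ℝ => Fin.init m) (𝓝[stdSimplex ℝ (Fin (d + 1))] simplexLift x)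
      (𝓝 x) := by
  have h := (continuous_id (X := Fin (d + 1) → ℝ)).finInit.tendsto (simplexLift x)
  have hx : Fin.init (simplexLift x) = x := by simp [simplexLift]
  exact (hx ▸ h).mono_left nhdsWithin_le_nhds

lemma exists_eventually_mul_norm_sq_le_of_comp_simplexLift {f : (Fin (d + 1) → ℝ) → ℝ}
    {x₀ : Fin d → ℝ} (h : ∃ c > 0, ∀ᶠ x in 𝓝 x₀, c * ‖x - x₀‖ ^ 2 ≤ f (simplexLift x)) :
    ∃ c > 0, ∀ᶠ m in 𝓝[stdSimplex ℝ (Fin (d + 1))] simplexLift x₀,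
      c * ‖m - simplexLift x₀‖ ^ 2 ≤ f m := by
  obtain ⟨c, hc, h⟩ := h
  refine ⟨c / (d + 1) ^ 2, by positivity, ?_⟩
  filter_upwards [(tendsto_init_nhdsWithin_simplexLift x₀).eventually h, self_mem_nhdsWithin]
    with m hm hmem
  have hlift := simplexLift_init hmem.2
  rw [hlift] at hm
  have hnorm := norm_tangentLift_le (Fin.init m - x₀)
  rw [tangentLift_sub, hlift] at hnorm
  calc c / (d + 1) ^ 2 * ‖m - simplexLift x₀‖ ^ 2
      ≤ c / (d + 1) ^ 2 * ((d + 1) * ‖Fin.init m - x₀‖) ^ 2 := by gcongr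
    _ = c * ‖Fin.init m - x₀‖ ^ 2 := by field_simp
    _ ≤ f m := hm

lemma exists_tangentLift_apply_eq_neg_one (hd : 1 ≤ d) (l : Fin (d + 1)) :
    ∃ y : Fin d → ℝ, tangentLift y l = -1 := by
  refine Fin.lastCases ⟨Pi.single ⟨0, hd⟩ 1, ?_⟩ (fun i => ⟨-Pi.single i 1, ?_⟩) l <;> simp

lemma simplexLift_pos_of_mem_interior (hd : 1 ≤ d) {x : Fin d → ℝ}
    (hx : x ∈ interior (solidSimplex d)) (l : Fin (d + 1)) : 0 < simplexLift x l := by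
  obtain ⟨y, hy⟩ := exists_tangentLift_apply_eq_neg_one hd l
  have hline : Tendsto (fun t : ℝ => x + t • y) (𝓝[>] 0) (𝓝 x) :=
    ((by fun_prop : Continuous fun t : ℝ => x + t • y).tendsto' 0 x (by simp)).mono_left
      nhdsWithin_le_nhds
  obtain ⟨t, hmem, ht⟩ := ((hline.eventually (mem_interior_iff_mem_nhds.1 hx)).and
    self_mem_nhdsWithin).exists
  have hnonneg := (simplexLift_mem_stdSimplex_iff.2 hmem).1 l
  rw [simplexLift_add, tangentLift_smul, Pi.add_apply, Pi.smul_apply, hy, smul_eq_mul] at hnonneg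
  linarith [show 0 < t from ht]

end SolidSimplex

/-! ### The free energy landscape -/

section Hessian

variable {κ : Type*} [Fintype κ]

/-- The negated Hessian matrix of `G` at `x`, in the coordinates of `κ → ℝ`. -/
noncomputable def negHessian [DecidableEq κ] (G : (κ → ℝ) → ℝ) (x : κ → ℝ) : Matrix κ κ ℝ :=
  Matrix.of fun k l => -fderiv ℝ (fun x => fderiv ℝ G x (Pi.single l 1)) x (Pi.single k 1)

lemma fderiv_fderiv_apply_eq_neg_dotProduct [DecidableEq κ] {G : (κ → ℝ) → ℝ} {x : κ → ℝ}
    (hG : ContDiffAt ℝ 2 G x) (y : κ → ℝ) :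
    fderiv ℝ (fderiv ℝ G) x y y = -(y ⬝ᵥ (negHessian G x).mulVec y) := by
  have hdiff : DifferentiableAt ℝ (fderiv ℝ G) x :=
    (hG.fderiv_right (m := 1) le_rfl).differentiableAt one_ne_zero
  have hentry (k l : κ) : negHessian G x k l
      = -fderiv ℝ (fderiv ℝ G) x (Pi.single k 1) (Pi.single l 1) := by
    rw [negHessian, Matrix.of_apply, fderiv_clm_apply hdiff (differentiableAt_const _)]
    simp
  have hy : y = ∑ k, y k • (Pi.single k 1 : κ → ℝ) := by simp [← Pi.single_smul, univ_sum_single]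
  conv_lhs => rw [hy]
  simp only [map_sum, map_smul, _root_.sum_apply, smul_apply, dotProduct, Matrix.mulVec, hentry,
    smul_eq_mul, mul_sum, ← sum_neg_distrib]
  rw [sum_comm]
  exact sum_congr rfl fun k _ => sum_congr rfl fun l _ => by ring

lemma two_mul_sum_mul_le {v z u : κ → ℝ} (hv : ∀ l, 0 < v l) (hv1 : ∑ l, v l = 1)
    (hu : ∑ l, u l = 0) :
    2 * ∑ l, z l * u l ≤ ∑ l, u l ^ 2 / v l + (∑ l, v l * z l ^ 2 - (∑ l, v l * z l) ^ 2) := by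
  set a := ∑ l, v l * z l
  have hsq : 0 ≤ ∑ l, v l * (z l - a - u l / v l) ^ 2 :=
    sum_nonneg fun l _ => mul_nonneg (hv l).le (sq_nonneg _)
  have hexpand : ∑ l, v l * (z l - a - u l / v l) ^ 2
      = ∑ l, v l * z l ^ 2 + a ^ 2 * ∑ l, v l + ∑ l, u l ^ 2 / v l - 2 * a * ∑ l, v l * z l
        - 2 * ∑ l, z l * u l + 2 * a * ∑ l, u l := by
    simp only [mul_sum, ← sum_add_distrib, ← sum_sub_distrib]
    refine sum_congr rfl fun l _ => ?_
    have := (hv l).ne'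
    field_simp
    ring
  rw [hv1, hu] at hexpand
  linarith [show ∑ l, v l * z l = a from rfl, hexpand ▸ hsq]

lemma dotProduct_mulVec_lt_sum_tangentLift_sq_div {d : ℕ} {x y : Fin d → ℝ}
    {H : Matrix (Fin d) (Fin d) ℝ} (hx : ∀ l, 0 < simplexLift x l) (hH : IsUnit H.det)
    (hS : (H⁻¹ - Matrix.diagonal x + Matrix.vecMulVec x x).PosDef) (hy : y ≠ 0) :
    y ⬝ᵥ H.mulVec y < ∑ l, tangentLift y l ^ 2 / simplexLift x l := by
  set z := H.mulVec y with hz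
  have hzy : H⁻¹.mulVec z = y := by
    rw [hz, Matrix.mulVec_mulVec, Matrix.nonsing_inv_mul _ hH, Matrix.one_mulVec]
  have hz0 : z ≠ 0 := fun h => hy (by rw [← hzy, h, Matrix.mulVec_zero])
  have hcov : ∑ i, x i * z i ^ 2 - (∑ i, x i * z i) ^ 2 < y ⬝ᵥ z := by
    have hpos := hS.dotProduct_mulVec_pos hz0
    rw [star_trivial, Matrix.add_mulVec, Matrix.sub_mulVec, hzy, dotProduct_add, dotProduct_sub,
      Matrix.vecMulVec_mulVec, dotProduct_comm z y] at hpos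
    have hdiag : z ⬝ᵥ (Matrix.diagonal x).mulVec z = ∑ i, x i * z i ^ 2 :=
      sum_congr rfl fun i _ => by rw [Matrix.mulVec_diagonal]; ring
    have hrank : z ⬝ᵥ MulOpposite.op (x ⬝ᵥ z) • x = (∑ i, x i * z i) ^ 2 := by
      rw [op_smul_eq_smul, dotProduct_smul, dotProduct_comm z x, smul_eq_mul, sq]
      rfl
    linarith
  have hdual := two_mul_sum_mul_le (z := Fin.snoc z 0) hx (sum_simplexLift x) (sum_tangentLift y)
  simp only [Fin.sum_univ_castSucc (n := d), Fin.snoc_castSucc, Fin.snoc_last,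
    simplexLift_castSucc, tangentLift_castSucc, zero_mul, ne_eq, OfNat.ofNat_ne_zero,
    not_false_eq_true, zero_pow, mul_zero, add_zero] at hdual
  rw [Fin.sum_univ_castSucc]
  simp only [tangentLift_castSucc, simplexLift_castSucc]
  have : ∑ i, z i * y i = y ⬝ᵥ z := dotProduct_comm z y
  linarith

end Hessian

section Landscape

open Topology

lemma continuousOn_freeEnergy {κ : Type*} [Fintype κ] {F : (κ → ℝ) → ℝ} {s : Set (κ → ℝ)}
    (hF : ContinuousOn F s) : ContinuousOn (freeEnergy F) s :=
  hF.add (continuous_finsetSum _ fun l _ =>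
    Real.continuous_negMulLog.comp (continuous_apply l)).continuousOn

lemma exists_eventually_mul_norm_sq_le_sub {κ : Type*} [Fintype κ] [DecidableEq κ]
    {G : (κ → ℝ) → ℝ} {x₀ : κ → ℝ} (hG : ContDiffAt ℝ 2 G x₀) (hG0 : fderiv ℝ G x₀ = 0)
    (hH : (negHessian G x₀).PosDef) :
    ∃ c > 0, ∀ᶠ x in 𝓝 x₀, c * ‖x - x₀‖ ^ 2 ≤ G x₀ - G x := by
  have hneg : (fderiv ℝ fun x => -G x) = -fderiv ℝ G := funext fun x => fderiv_fun_neg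
  obtain ⟨b, -, c, hc, hgrowth⟩ := exists_eventually_mul_norm_sq_le_sub_add (χ := 0) hG.neg
    (by rw [hneg, Pi.neg_apply, hG0, neg_zero]) continuous_const (by simp) fun y hy => by
      rw [hneg, fderiv_neg, neg_apply, neg_apply, fderiv_fderiv_apply_eq_neg_dotProduct hG]
      simpa using hH.dotProduct_mulVec_pos hy
  refine ⟨c, hc, hgrowth.mono fun x hx => hx.trans_eq ?_⟩
  rw [Pi.zero_apply, mul_zero, add_zero, neg_sub_neg]

variable {d : ℕ} {J : Type*} {F : (Fin (d + 1) → ℝ) → ℝ}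

lemma contDiffAt_freeEnergy_comp_simplexLift {n : WithTop ℕ∞} (hd : 1 ≤ d)
    (hF : ContDiffOn ℝ n F (stdSimplex ℝ (Fin (d + 1)))) {x : Fin d → ℝ}
    (hx : x ∈ interior (solidSimplex d)) : ContDiffAt ℝ n (freeEnergy F ∘ simplexLift) x := by
  have hmaps : Set.MapsTo simplexLift (solidSimplex d) (stdSimplex ℝ (Fin (d + 1))) :=
    fun x hx => simplexLift_mem_stdSimplex_iff.2 hx
  have hlift : ContDiffAt ℝ n (simplexLift (d := d)) x := contDiff_simplexLift.contDiffAt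
  have hFx : ContDiffAt ℝ n (F ∘ simplexLift) x :=
    (hF.comp contDiff_simplexLift.contDiffOn hmaps).contDiffAt (mem_interior_iff_mem_nhds.1 hx)
  refine hFx.add (ContDiffAt.sum fun l _ => ?_)
  have hcoord := contDiffAt_pi.1 hlift l
  exact hcoord.neg.mul (hcoord.log (simplexLift_pos_of_mem_interior hd hx l).ne')

lemma fderiv_eq_zero_of_isMaxOn_solidSimplex {G : (Fin d → ℝ) → ℝ} {x : Fin d → ℝ}
    (hx : x ∈ interior (solidSimplex d)) (hmax : IsMaxOn G (solidSimplex d) x) :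
    fderiv ℝ G x = 0 :=
  (hmax.isLocalMax (mem_interior_iff_mem_nhds.1 hx)).fderiv_eq_zero

theorem hasQuadraticWells_of_posDef_negHessian (hd : 1 ≤ d)
    (hF : ContDiffOn ℝ 2 F (stdSimplex ℝ (Fin (d + 1)))) {M : J → Fin d → ℝ}
    (hMint : ∀ j, M j ∈ interior (solidSimplex d))
    (hM : ∀ x ∈ solidSimplex d,
      IsMaxOn (freeEnergy F ∘ simplexLift) (solidSimplex d) x ↔ x ∈ Set.range M)
    (hH : ∀ j, (negHessian (freeEnergy F ∘ simplexLift) (M j)).PosDef) (j₀ : J) :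
    HasQuadraticWells F (simplexLift ∘ M) (freeEnergy F (simplexLift (M j₀))) := by
  have hMmem (j : J) : M j ∈ solidSimplex d := interior_subset (hMint j)
  have hMmax (j : J) : IsMaxOn (freeEnergy F ∘ simplexLift) (solidSimplex d) (M j) :=
    (hM _ (hMmem j)).2 ⟨j, rfl⟩
  have hMeq (j : J) : freeEnergy F (simplexLift (M j)) = freeEnergy F (simplexLift (M j₀)) :=
    le_antisymm (hMmax j₀ (hMmem j)) (hMmax j (hMmem j₀))
  refine ⟨fun j => simplexLift_pos_of_mem_interior hd (hMint j), fun j => sum_simplexLift _, ?_⟩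
  have : Nonempty J := ⟨j₀⟩
  simp only [← dist_eq_norm]
  refine exists_forall_exists_mul_dist_sq_le (isCompact_stdSimplex ℝ _)
    (continuousOn_freeEnergy hF.continuousOn) (fun j => ?_) fun m hm hmM => ?_
  · simp only [dist_eq_norm, Function.comp_apply, ← hMeq j]
    exact exists_eventually_mul_norm_sq_le_of_comp_simplexLift
      (exists_eventually_mul_norm_sq_le_sub
        (contDiffAt_freeEnergy_comp_simplexLift hd hF (hMint j))
        (fderiv_eq_zero_of_isMaxOn_solidSimplex (hMint j) (hMmax j)) (hH j))
  · have hlift := simplexLift_init hm.2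
    have hinit : Fin.init m ∈ solidSimplex d := simplexLift_mem_stdSimplex_iff.1 (hlift.symm ▸ hm)
    by_contra! hge
    have hmax : IsMaxOn (freeEnergy F ∘ simplexLift) (solidSimplex d) (Fin.init m) := by
      refine isMaxOn_iff.2 fun x hx => (hMmax j₀ hx).trans ?_
      rwa [Function.comp_apply, Function.comp_apply, hlift]
    obtain ⟨j, hj⟩ := (hM _ hinit).1 hmax
    exact hmM ⟨j, by rw [Function.comp_apply, hj, hlift]⟩

theorem outweighsProduct_of_posDef (hd : 1 ≤ d)
    (hF : ContDiffOn ℝ 2 F (stdSimplex ℝ (Fin (d + 1)))) {x₀ : Fin d → ℝ}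
    (hx₀ : x₀ ∈ interior (solidSimplex d))
    (hmax : IsMaxOn (freeEnergy F ∘ simplexLift) (solidSimplex d) x₀)
    (hH : IsUnit (negHessian (freeEnergy F ∘ simplexLift) x₀).det)
    (hS : ((negHessian (freeEnergy F ∘ simplexLift) x₀)⁻¹ - Matrix.diagonal x₀
      + Matrix.vecMulVec x₀ x₀).PosDef) :
    OutweighsProduct F (simplexLift x₀) (freeEnergy F (simplexLift x₀)) := by
  have hpos := simplexLift_pos_of_mem_interior hd hx₀
  have hG := contDiffAt_freeEnergy_comp_simplexLift hd hF hx₀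
  obtain ⟨b, hb, η, hη, hgrowth⟩ := exists_eventually_mul_norm_sq_le_sub_add
    (χ := fun y => ∑ l, tangentLift y l ^ 2 / simplexLift x₀ l) hG
    (fderiv_eq_zero_of_isMaxOn_solidSimplex hx₀ hmax)
    (by have := continuous_tangentLift (d := d); fun_prop)
    (fun t y => by simp only [tangentLift_smul, Pi.smul_apply, smul_eq_mul, mul_pow, mul_div_assoc,
      ← mul_sum])
    fun y hy => by
      rw [fderiv_fderiv_apply_eq_neg_dotProduct hG]
      linarith [dotProduct_mulVec_lt_sum_tangentLift_sq_div hpos hH hS hy]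
  have hrelEnt := (contDiff_simplexLift (n := 0)).continuous.tendsto x₀ |>.eventually
    (eventually_mul_sum_sq_div_le_relEnt hpos hb)
  obtain ⟨c, hc, hlocal⟩ := exists_eventually_mul_norm_sq_le_of_comp_simplexLift
    (f := fun m => freeEnergy F m + relEnt m (simplexLift x₀) - freeEnergy F (simplexLift x₀))
    ⟨η, hη, by
      filter_upwards [hgrowth, hrelEnt] with x hx hx'
      have := hx' (by rw [sum_simplexLift, sum_simplexLift])
      simp only [Function.comp_apply, tangentLift_sub, Pi.sub_apply] at hx
      linarith⟩
  exact ⟨c, hc, hlocal.mono fun m hm => by linarith⟩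

end Landscape

lemma eventually_mul_le_of_tendsto_div {k : ℕ → ℕ} {α β : ℝ}
    (hk : Tendsto (fun N => (k N : ℝ) / N) atTop (nhds α)) (hβ : β < α) :
    ∀ᶠ N : ℕ in atTop, β * N ≤ k N := by
  filter_upwards [hk.eventually_const_lt hβ, eventually_gt_atTop 0] with N hN hN0
  exact ((lt_div_iff₀ (Nat.cast_pos.2 hN0)).1 hN).le

end MeanFieldPotts

open MeanFieldPotts in
theorem stmt_5_general {d : ℕ} (hd : 1 ≤ d) {J : Type*} [Fintype J]
    {F : (Fin (d + 1) → ℝ) → ℝ} (hF : ContDiffOn ℝ 2 F (stdSimplex ℝ (Fin (d + 1))))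
    {M : J → Fin d → ℝ} (hMint : ∀ j, M j ∈ interior (solidSimplex d))
    (hM : ∀ x ∈ solidSimplex d,
      IsMaxOn (freeEnergy F ∘ simplexLift) (solidSimplex d) x ↔ x ∈ Set.range M)
    (hH : ∀ j, (negHessian (freeEnergy F ∘ simplexLift) (M j)).PosDef) {j₀ : J}
    (hS : ((negHessian (freeEnergy F ∘ simplexLift) (M j₀))⁻¹ - Matrix.diagonal (M j₀)
      + Matrix.vecMulVec (M j₀) (M j₀)).PosDef)
    {w : J → ℝ} (hw : ∀ j, 0 < w j) {k : ℕ → ℕ} (hk : ∀ N, k N ≤ N) {α : ℝ} (hα : 0 < α)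
    (hkα : ∀ᶠ N : ℕ in atTop, α * N ≤ k N) :
    0 < liminf (fun N => relEnt (marginal (hk N) (gibbsMeasure F))
      (productMixture w (simplexLift ∘ M))) atTop := by
  have : Nontrivial (Fin (d + 1)) := Fin.nontrivial_iff_two_le.2 (by omega)
  have hmax : IsMaxOn (freeEnergy F ∘ simplexLift) (solidSimplex d) (M j₀) :=
    (hM _ (interior_subset (hMint j₀))).2 ⟨j₀, rfl⟩
  exact (hasQuadraticWells_of_posDef_negHessian hd hF hMint hM hH j₀).liminf_relEnt_marginal_pos
    (outweighsProduct_of_posDef hd hF (hMint j₀) hmax (hH j₀).det_pos.ne'.isUnit hS) hw hk hα hkα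

open MeanFieldPotts in
/-- Under assumptions (A) and (B) (with each `Σ^{(j)}` positive definite),
let `ρ^{(k)} = |w|⁻¹ ∑_j w_j ρ_j^{⊗k}` with `ρ_j(l) = M_{j,l}`. If `k(N)/N → α ∈ (0,1]`
then `liminf_N H(μ_N^{(k)} | ρ^{(k)}) > 0`: propagation of chaos stops for marginals of
size proportional to `N`. Here `q = d + 1`, `d ≥ 1`. -/
theorem stmt_5
    (d p : ℕ) (hd : 1 ≤ d) (hp : 1 ≤ p)
    (F : (Fin (d + 1) → ℝ) → ℝ)
    (hF : ContDiffOn ℝ 2 F {m : Fin (d + 1) → ℝ | (∀ k, 0 ≤ m k) ∧ ∑ k, m k = 1})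
    (ent : (Fin (d + 1) → ℝ) → ℝ)
    (hent : ∀ m, ent m = -∑ k, m k * Real.log (m k))
    (G : (Fin d → ℝ) → ℝ)
    (hG : ∀ x : Fin d → ℝ,
      G x = F (Fin.snoc x (1 - ∑ k, x k)) + ent (Fin.snoc x (1 - ∑ k, x k)))
    (Δhat : Set (Fin d → ℝ))
    (hΔhat : Δhat = {x : Fin d → ℝ | (∀ k, 0 ≤ x k) ∧ ∑ k, x k ≤ 1})
    -- (A): the global maximizers of `G` on `Δ̂` are exactly the `p` distinct points
    -- `M 1, …, M p`, all lying in the interior of `Δ̂`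
    (M : Fin p → Fin d → ℝ)
    (hMinj : Function.Injective M)
    (hMint : ∀ j, M j ∈ interior Δhat)
    (hMmax : ∀ j, ∀ x ∈ Δhat, G x ≤ G (M j))
    (hMonly : ∀ x ∈ Δhat, (∀ y ∈ Δhat, G y ≤ G x) → ∃ j, x = M j)
    -- (B): `H_j = -Hess G (M_j)` is positive definite
    (H : Fin p → Matrix (Fin d) (Fin d) ℝ)
    (hH : ∀ j k l, H j k l =
      -(fderiv ℝ (fun x => fderiv ℝ G x (Pi.single l 1)) (M j)) (Pi.single k 1))
    (hHpd : ∀ j, (H j).PosDef)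
    (Mfull : Fin p → Fin (d + 1) → ℝ)
    (hMfull : ∀ j, Mfull j = Fin.snoc (M j) (1 - ∑ k, M j k))
    (w : Fin p → ℝ)
    (hw : ∀ j, w j = (Real.sqrt ((H j).det * ∏ k, Mfull j k))⁻¹)
    (Z : ℕ → ℝ)
    (hZ : ∀ N : ℕ, Z N = ∑ σ : Fin N → Fin (d + 1),
      Real.exp ((N : ℝ) * F (fun k => ((Finset.univ.filter fun i => σ i = k).card : ℝ) / N)))
    (μ : ∀ N : ℕ, (Fin N → Fin (d + 1)) → ℝ)
    (hμ : ∀ N σ, μ N σ =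
      Real.exp ((N : ℝ) * F (fun k => ((Finset.univ.filter fun i => σ i = k).card : ℝ) / N)) / Z N)
    -- the mixing covariance matrices are positive definite
    (Smat : Fin p → Matrix (Fin d) (Fin d) ℝ)
    (hS : ∀ j, Smat j = (H j)⁻¹ - Matrix.diagonal (M j) + Matrix.of fun k l => M j k * M j l)
    (hSpd : ∀ j, (Smat j).PosDef)
    -- the marginal block sizes, with k(N)/N → α ∈ (0,1]
    (k : ℕ → ℕ) (hk2 : ∀ N, k N ≤ N)
    (α : ℝ) (hα0 : 0 < α) (hα1 : α ≤ 1)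
    (hkα : Tendsto (fun N => (k N : ℝ) / N) atTop (nhds α))
    -- the k(N)-dimensional marginal of μ_N
    (μmarg : ∀ N : ℕ, (Fin (k N) → Fin (d + 1)) → ℝ)
    (hμmarg : ∀ N (τ : Fin (k N) → Fin (d + 1)), μmarg N τ =
      ∑ σ : Fin N → Fin (d + 1),
        if ∀ i : Fin (k N), σ (Fin.castLE (hk2 N) i) = τ i then μ N σ else 0)
    -- the mixture of product measures ρ^{(k)}
    (ρmix : ∀ N : ℕ, (Fin (k N) → Fin (d + 1)) → ℝ)
    (hρmix : ∀ N (τ : Fin (k N) → Fin (d + 1)), ρmix N τ =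
      (∑ j, w j)⁻¹ * ∑ j, w j * ∏ i, Mfull j (τ i)) :
    0 < Filter.liminf (fun N => relEnt (μmarg N) (ρmix N)) atTop := by
  subst hΔhat
  obtain rfl : G = freeEnergy F ∘ simplexLift := funext fun x => by
    rw [hG, hent, Function.comp_apply, freeEnergy_eq_add_neg_sum]
    rfl
  have hHess (j : Fin p) : negHessian (freeEnergy F ∘ simplexLift) (M j) = H j :=
    Matrix.ext fun k l => (hH j k l).symm
  obtain rfl : Mfull = simplexLift ∘ M := funext hMfull
  have hw0 (j : Fin p) : 0 < w j := by
    rw [hw]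
    exact inv_pos.2 (Real.sqrt_pos.2 (mul_pos (hHpd j).det_pos (Finset.prod_pos fun l _ =>
      simplexLift_pos_of_mem_interior hd (hMint j) l)))
  have hGibbs (N : ℕ) : μmarg N = marginal (hk2 N) (gibbsMeasure F) := funext fun τ => by
    simp only [hμmarg, hμ, hZ, marginal_apply, gibbsMeasure_fin_apply]
  have hMixture (N : ℕ) : ρmix N = productMixture w (simplexLift ∘ M) := funext (hρmix N)
  simp only [hGibbs, hMixture]
  refine stmt_5_general hd hF hMint (fun x hx => ⟨fun hmax => ?_, ?_⟩)
    (fun j => hHess j ▸ hHpd j) (j₀ := ⟨0, hp⟩) (by rw [hHess]; exact hS _ ▸ hSpd _) hw0 hk2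
    (half_pos hα0) (eventually_mul_le_of_tendsto_div hkα (half_lt_self hα0))
  · exact (hMonly x hx hmax).imp fun j => Eq.symm
  · rintro ⟨j, rfl⟩
    exact hMmax j
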